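/- arXiv:2410.11170 — 2 statements merged into one kernel-verified Lean document; each statement's English description precedes it below -/
import Mathlib

section
/- Let δ > 0 and let u ∈ C²(S² ∩ B_δ(S) \ {S}) be a (−1)-homogeneous axisymmetric solution of the stationary Navier–Stokes equations, and let τ := lim_{x∈S², x→S} |x'| u_θ(x) (which exists and is finite). If τ < 2 and τ ≠ 0, then both lim_{x∈S², x→S} |x'| u_φ(x) and lim_{x∈S², x→S} |x'|^{max{τ,0}} u_r(x) exist and are finite. -/
noncomputable section

open Real Filter MeasureTheory Metric Topology
open scoped ENNReal InnerProductSpace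

abbrev V3 := EuclideanSpace ℝ (Fin 3)
abbrev V2 := EuclideanSpace ℝ (Fin 2)

/-- standard basis vector in `ℝ³` -/
def e3 (j : Fin 3) : V3 := EuclideanSpace.single j 1

/-- partial derivative `∂_j f` -/
def pd (j : Fin 3) (f : V3 → ℝ) (x : V3) : ℝ := fderiv ℝ f x (e3 j)

/-- Laplacian on `ℝ³` -/
def lap3 (f : V3 → ℝ) (x : V3) : ℝ := ∑ j, pd j (fun y => pd j f y) x

/-- stationary Navier–Stokes equations `-Δu + (u·∇)u + ∇p = 0`, `div u = 0` at `x` -/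
def NSEq (u : V3 → V3) (p : V3 → ℝ) (x : V3) : Prop :=
  (∀ i, - lap3 (fun z => u z i) x + (∑ j, u x j * pd j (fun z => u z i) x) + pd i p x = 0)
  ∧ (∑ j, pd j (fun z => u z j) x) = 0

/-- stationary Euler equations `(u·∇)u + ∇p = 0`, `div u = 0` at `x` -/
def EulerEq (u : V3 → V3) (p : V3 → ℝ) (x : V3) : Prop :=
  (∀ i, (∑ j, u x j * pd j (fun z => u z i) x) + pd i p x = 0)
  ∧ (∑ j, pd j (fun z => u z j) x) = 0

/-- south pole -/
def S3 : V3 := EuclideanSpace.single 2 (-1)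
/-- north pole -/
def N3 : V3 := EuclideanSpace.single 2 1

/-- the unit sphere `S²` -/
def sphere2 : Set V3 := Metric.sphere (0 : V3) 1

/-- the open cone over a subset of the unit sphere -/
def cone3 (Ω : Set V3) : Set V3 := {x : V3 | x ≠ 0 ∧ (‖x‖⁻¹ • x) ∈ Ω}

/-- `|x'| = √(x₁² + x₂²)` -/
def rho (x : V3) : ℝ := Real.sqrt ((x 0) ^ 2 + (x 1) ^ 2)

/-- the `x₃`-axis `{x' = 0}` -/
def axis3 : Set V3 := {x : V3 | x 0 = 0 ∧ x 1 = 0}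

/-- `Ω_{a,b,R} = {a < x₃ < b, |x'| < R}` -/
def OmegaR (a b R : ℝ) : Set V3 := {x : V3 | a < x 2 ∧ x 2 < b ∧ rho x < R}

/-- build a point of `ℝ³` from `x' ∈ ℝ²` and `x₃ ∈ ℝ` -/
def emb (y : V2) (t : ℝ) : V3 := (EuclideanSpace.equiv (Fin 3) ℝ).symm ![y 0, y 1, t]

/-- spherical component `u_r = u · e_r` -/
def uRc (u : V3 → V3) (x : V3) : ℝ := (u x 0 * x 0 + u x 1 * x 1 + u x 2 * x 2) / ‖x‖

/-- spherical component `u_θ = u · e_θ` -/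
def uTc (u : V3 → V3) (x : V3) : ℝ :=
  (u x 0 * x 0 * x 2 + u x 1 * x 1 * x 2) / (‖x‖ * rho x) - u x 2 * rho x / ‖x‖

/-- spherical component `u_φ = u · e_φ` -/
def uPc (u : V3 → V3) (x : V3) : ℝ := (-(u x 0) * x 1 + u x 1 * x 0) / rho x

/-- axisymmetry on a set: the spherical components are independent of the meridian angle -/
def AxisymOn (u : V3 → V3) (Ω : Set V3) : Prop :=
  ∀ x ∈ Ω, ∀ y ∈ Ω, ‖x‖ = ‖y‖ → x 2 = y 2 →
    uRc u x = uRc u y ∧ uTc u x = uTc u y ∧ uPc u x = uPc u y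

/-- spherical frame vector `e_r` -/
def eRv (x : V3) : V3 := ‖x‖⁻¹ • x

/-- spherical frame vector `e_θ` -/
def eThv (x : V3) : V3 := (EuclideanSpace.equiv (Fin 3) ℝ).symm
  ![x 2 * x 0 / (‖x‖ * rho x), x 2 * x 1 / (‖x‖ * rho x), -(rho x) / ‖x‖]

/-- spherical frame vector `e_φ` -/
def ePhv (x : V3) : V3 := (EuclideanSpace.equiv (Fin 3) ℝ).symm ![-(x 1) / rho x, x 0 / rho x, 0]

/-- the spherical cap `S² ∩ B_δ(S) \ {S}` -/
def NSCap (δ : ℝ) : Set V3 := (sphere2 ∩ Metric.ball S3 δ) \ {S3}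

/-- the spherical cap `S² ∩ B_δ(S)` -/
def NSCapFull (δ : ℝ) : Set V3 := sphere2 ∩ Metric.ball S3 δ

/-!
Measure the polar distance `t` from the south pole and let `a`, `b = -u_θ`, `g` be the velocity
components on the unit sphere. By homogeneity the radial momentum equation expresses the pressure
through `a`, `b`, `g`, so the pressure is axisymmetric too and the equations become ordinary
differential equations in `t`. In the unknowns `B = sin t * b → -τ`, `Φ = sin t * g`,
`H = g' + cot t * g`, `q = p - a + (b² + g²) / 2` and `K = sin t * a' - B * a - 2 * B` they form a
first-order system which can be integrated step by step. A solution of `t * y' = β * y + e` with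
`e` bounded and `β ≥ -κ` near `0`, `κ > 0`, is `O(t ^ (-κ))`. For `max τ 0 < κ < 2` this bounds
`H`; hence `Φ' = sin t * H = O(t ^ (1 - κ))` is integrable and `Φ` has a limit; then `q` is
`O(t ^ (-κ))`, so that `K' = -2 * sin t * q` is integrable and `K` converges. Finally
`sin t * a' = B * a + 2 * B + K` is a scalar equation with convergent coefficients: for `τ < 0` it
is stable as `t → 0` and `a` converges, and for `τ > 0` the derivative of `sin t ^ τ * a` is
integrable because `B' = -sin t * a` forces `B + τ = O(t ^ (2 - κ))`.
-/

section

open Asymptotics Laplacian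

section PowerGrowth

lemma tendsto_rpow_nhdsGT_zero {α : ℝ} (hα : 0 < α) :
    Tendsto (fun t : ℝ ↦ t ^ α) (𝓝[>] 0) (𝓝 0) := by
  simpa [zero_rpow hα.ne'] using
    (continuousAt_rpow_const 0 α (Or.inr hα.le)).tendsto.mono_left nhdsWithin_le_nhds

lemma isBigO_rpow_rpow_nhdsGT_zero_of_le {α β : ℝ} (hβα : β ≤ α) :
    (fun t : ℝ ↦ t ^ α) =O[𝓝[>] 0] (fun t : ℝ ↦ t ^ β) := by
  refine .of_bound' ?_
  filter_upwards [Ioo_mem_nhdsGT one_pos] with t ht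
  rw [norm_of_nonneg (rpow_nonneg ht.1.le _), norm_of_nonneg (rpow_nonneg ht.1.le _)]
  exact rpow_le_rpow_of_exponent_ge ht.1 ht.2.le hβα

lemma isBigO_mul_rpow {f g : ℝ → ℝ} {α β γ : ℝ} (hγ : α + β = γ)
    (hf : f =O[𝓝[>] 0] (fun t : ℝ ↦ t ^ α)) (hg : g =O[𝓝[>] 0] (fun t : ℝ ↦ t ^ β)) :
    (fun t ↦ f t * g t) =O[𝓝[>] 0] (fun t : ℝ ↦ t ^ γ) := by
  refine (hf.mul hg).congr' .rfl ?_
  filter_upwards [self_mem_nhdsWithin] with t ht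
  rw [← hγ, rpow_add ht]

variable {E : Type*} [NormedAddCommGroup E] {y y' : ℝ → E}

lemma tendsto_of_sub_isBigO_rpow {α : ℝ} (hα : 0 < α) {L : E}
    (hyL : (fun t ↦ y t - L) =O[𝓝[>] 0] (fun t : ℝ ↦ t ^ α)) : Tendsto y (𝓝[>] 0) (𝓝 L) :=
  tendsto_sub_nhds_zero_iff.1 (hyL.trans_tendsto (tendsto_rpow_nhdsGT_zero hα))

variable [NormedSpace ℝ E]

lemma norm_sub_le_of_norm_deriv_le_rpow {α C x z : ℝ} (hα : α ≠ 0) (hx : 0 < x) (hxz : x ≤ z)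
    (hy : ∀ t ∈ Set.Icc x z, HasDerivAt y (y' t) t)
    (hy' : ∀ t ∈ Set.Icc x z, ‖y' t‖ ≤ C * t ^ (α - 1)) :
    ‖y z - y x‖ ≤ C / α * (z ^ α - x ^ α) := by
  have hB : ∀ t ∈ Set.Icc x z,
      HasDerivAt (fun t ↦ C / α * (t ^ α - x ^ α)) (C * t ^ (α - 1)) t := fun t ht ↦ by
    refine (((hasDerivAt_rpow_const (Or.inl (hx.trans_le ht.1).ne')).sub_const _).const_mul
      (C / α)).congr_deriv ?_
    field_simp
  exact image_norm_le_of_norm_deriv_right_le_deriv_boundary'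
    (fun t ht ↦ ((hy t ht).sub_const (y x)).continuousAt.continuousWithinAt)
    (fun t ht ↦ ((hy t (Set.Ico_subset_Icc_self ht)).sub_const (y x)).hasDerivWithinAt)
    (by simp) (fun t ht ↦ (hB t ht).continuousAt.continuousWithinAt)
    (fun t ht ↦ (hB t (Set.Ico_subset_Icc_self ht)).hasDerivWithinAt)
    (fun t ht ↦ hy' t (Set.Ico_subset_Icc_self ht)) (Set.right_mem_Icc.2 hxz)

lemma exists_forall_Ioo_of_isBigO_deriv {α : ℝ}
    (hy : ∀ᶠ t in 𝓝[>] (0 : ℝ), HasDerivAt y (y' t) t)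
    (hy' : y' =O[𝓝[>] 0] (fun t : ℝ ↦ t ^ (α - 1))) :
    ∃ C > 0, ∃ ε > 0, ∀ t ∈ Set.Ioo 0 ε, HasDerivAt y (y' t) t ∧ ‖y' t‖ ≤ C * t ^ (α - 1) := by
  obtain ⟨C, hC, hbound⟩ := hy'.exists_pos
  obtain ⟨ε, hε, hsub⟩ := mem_nhdsGT_iff_exists_Ioo_subset.1 (hy.and hbound.bound)
  refine ⟨C, hC, ε, hε, fun t ht ↦ ⟨(hsub ht).1, ?_⟩⟩
  simpa only [norm_of_nonneg (rpow_nonneg ht.1.le _)] using (hsub ht).2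

lemma exists_sub_isBigO_rpow [CompleteSpace E] {α : ℝ} (hα : 0 < α)
    (hy : ∀ᶠ t in 𝓝[>] (0 : ℝ), HasDerivAt y (y' t) t)
    (hy' : y' =O[𝓝[>] 0] (fun t : ℝ ↦ t ^ (α - 1))) :
    ∃ L, (fun t ↦ y t - L) =O[𝓝[>] 0] (fun t : ℝ ↦ t ^ α) := by
  obtain ⟨C, hC, ε, hε, h⟩ := exists_forall_Ioo_of_isBigO_deriv hy hy'
  have hdist : ∀ x ∈ Set.Ioo 0 ε, ∀ z ∈ Set.Ioo 0 ε,
      dist (y x) (y z) ≤ C / α * |x ^ α - z ^ α| := by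
    intro x hx z hz
    wlog hxz : z ≤ x generalizing x z
    · rw [dist_comm, abs_sub_comm]
      exact this z hz x hx (le_of_not_ge hxz)
    have hsub : Set.Icc z x ⊆ Set.Ioo 0 ε := Set.Icc_subset_Ioo hz.1 hx.2
    rw [dist_eq_norm]
    refine (norm_sub_le_of_norm_deriv_le_rpow hα.ne' hz.1 hxz (fun t ht ↦ (h t (hsub ht)).1)
      (fun t ht ↦ (h t (hsub ht)).2)).trans ?_
    gcongr
    exact le_abs_self _
  have hIoo : Set.Ioo 0 ε ∈ 𝓝[>] (0 : ℝ) := Ioo_mem_nhdsGT hε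
  have hpow := tendsto_rpow_nhdsGT_zero hα
  have hcauchy : Cauchy (map y (𝓝[>] 0)) := by
    refine cauchy_map_iff.2 ⟨inferInstance, tendsto_uniformity_iff_dist_tendsto_zero.2 ?_⟩
    refine squeeze_zero' (.of_forall fun _ ↦ dist_nonneg)
      (g := fun p : ℝ × ℝ ↦ C / α * |p.1 ^ α - p.2 ^ α|) ?_ ?_
    · filter_upwards [prod_mem_prod hIoo hIoo] with p hp using hdist _ hp.1 _ hp.2
    · simpa using ((hpow.comp tendsto_fst).sub (hpow.comp tendsto_snd)).abs.const_mul (C / α)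
  obtain ⟨L, hL⟩ := CompleteSpace.complete hcauchy
  refine ⟨L, .of_bound (C / α) ?_⟩
  filter_upwards [hIoo] with t ht
  have hlim : Tendsto (fun x ↦ C / α * |t ^ α - x ^ α|) (𝓝[>] 0) (𝓝 (C / α * |t ^ α|)) := by
    simpa using (hpow.const_sub (t ^ α)).abs.const_mul (C / α)
  rw [← dist_eq_norm, norm_eq_abs]
  refine le_of_tendsto_of_tendsto (Tendsto.dist tendsto_const_nhds hL) hlim ?_
  filter_upwards [hIoo] with x hx using hdist t ht x hx

lemma isBigO_rpow_neg_of_deriv {k : ℝ} (hk : 0 < k)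
    (hy : ∀ᶠ t in 𝓝[>] (0 : ℝ), HasDerivAt y (y' t) t)
    (hy' : y' =O[𝓝[>] 0] (fun t : ℝ ↦ t ^ (-k - 1))) :
    y =O[𝓝[>] 0] (fun t : ℝ ↦ t ^ (-k)) := by
  obtain ⟨C, hC, ε, hε, h⟩ := exists_forall_Ioo_of_isBigO_deriv hy hy'
  obtain ⟨z, hz⟩ : (Set.Ioo 0 ε).Nonempty := Set.nonempty_Ioo.2 hε
  have hdiff : (fun t ↦ y z - y t) =O[𝓝[>] 0] (fun t : ℝ ↦ t ^ (-k)) := by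
    refine .of_bound (C / k) ?_
    filter_upwards [Ioo_mem_nhdsGT hz.1] with t ht
    have hsub : Set.Icc t z ⊆ Set.Ioo 0 ε := Set.Icc_subset_Ioo ht.1 hz.2
    calc ‖y z - y t‖ ≤ C / -k * (z ^ (-k) - t ^ (-k)) :=
          norm_sub_le_of_norm_deriv_le_rpow (neg_ne_zero.2 hk.ne') ht.1 ht.2.le
            (fun s hs ↦ (h s (hsub hs)).1) (fun s hs ↦ (h s (hsub hs)).2)
      _ = C / k * (t ^ (-k) - z ^ (-k)) := by ring
      _ ≤ C / k * ‖t ^ (-k)‖ := by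
          rw [norm_of_nonneg (rpow_nonneg ht.1.le _)]
          gcongr
          exact sub_le_self _ (rpow_nonneg hz.1.le _)
  have hconst : (fun _ ↦ y z) =O[𝓝[>] 0] (fun t : ℝ ↦ t ^ (-k)) :=
    (isBigO_const_const (y z) one_ne_zero _).trans <| by
      simpa using isBigO_rpow_rpow_nhdsGT_zero_of_le (neg_nonpos.2 hk.le)
  simpa using hconst.sub hdiff

end PowerGrowth

section LinearODE

variable {F : Type*} [NormedAddCommGroup F] [InnerProductSpace ℝ F] {y y' e : ℝ → F} {β : ℝ → ℝ}

lemma mul_sqrt_norm_sq_add_sq_sub_le_inner_div {v f : F} {b κ M η : ℝ} (hη : 0 < η)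
    (hb : κ ≤ b) (hf : ‖f‖ ≤ M) :
    κ * √(‖v‖ ^ 2 + η ^ 2) - (M + |κ| * η) ≤ ⟪v, b • v + f⟫_ℝ / √(‖v‖ ^ 2 + η ^ 2) := by
  set w : ℝ := √(‖v‖ ^ 2 + η ^ 2)
  have hsq : w ^ 2 = ‖v‖ ^ 2 + η ^ 2 := sq_sqrt (by positivity)
  have hηw : η ≤ w := le_sqrt_of_sq_le (le_add_of_nonneg_left (sq_nonneg _))
  have hvw : ‖v‖ ≤ w := le_sqrt_of_sq_le (le_add_of_nonneg_right (sq_nonneg _))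
  have hinner : ⟪v, b • v + f⟫_ℝ = b * ‖v‖ ^ 2 + ⟪v, f⟫_ℝ := by
    rw [inner_add_right, real_inner_smul_right, real_inner_self_eq_norm_sq]
  have hforce : -(w * M) ≤ ⟪v, f⟫_ℝ := calc
    -(w * M) ≤ -(‖v‖ * ‖f‖) := by gcongr
    _ ≤ ⟪v, f⟫_ℝ := neg_le_of_abs_le (abs_real_inner_le_norm v f)
  have hbv : κ * ‖v‖ ^ 2 ≤ b * ‖v‖ ^ 2 := by gcongr
  have hκη : κ * η ^ 2 ≤ |κ| * η * w := calc
    κ * η ^ 2 ≤ |κ| * (η * η) := by rw [sq]; gcongr; exact le_abs_self κ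
    _ ≤ |κ| * η * w := by rw [mul_assoc]; gcongr
  rw [le_div_iff₀ (hη.trans_le hηw), hinner]
  linear_combination hbv + hforce + hκη + κ * hsq

lemma monotoneOn_sqrt_norm_sq_add_sq_sub_mul_rpow {κ M ε η : ℝ} (hκ : κ ≠ 0) (hη : 0 < η)
    (hy : ∀ t ∈ Set.Ioo 0 ε, HasDerivAt y (y' t) t)
    (hode : ∀ t ∈ Set.Ioo 0 ε, t • y' t = β t • y t + e t)
    (hβ : ∀ t ∈ Set.Ioo 0 ε, κ ≤ β t) (he : ∀ t ∈ Set.Ioo 0 ε, ‖e t‖ ≤ M) :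
    MonotoneOn (fun t ↦ (√(‖y t‖ ^ 2 + η ^ 2) - (M + |κ| * η) / κ) * t ^ (-κ))
      (Set.Ioo 0 ε) := by
  set w : ℝ → ℝ := fun t ↦ √(‖y t‖ ^ 2 + η ^ 2) with hw
  have hderiv : ∀ t ∈ Set.Ioo 0 ε, HasDerivAt (fun t ↦ (w t - (M + |κ| * η) / κ) * t ^ (-κ))
      (⟪y t, y' t⟫_ℝ / w t * t ^ (-κ) +
        (w t - (M + |κ| * η) / κ) * (-κ * t ^ (-κ - 1))) t := by
    intro t ht
    have hw' := ((hy t ht).norm_sq.add_const (η ^ 2)).sqrt (by positivity)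
    refine ((hw'.sub_const ((M + |κ| * η) / κ)).mul
      (hasDerivAt_rpow_const (Or.inl ht.1.ne'))).congr_deriv ?_
    simp only [hw]
    field_simp
  have hgrowth : ∀ t ∈ Set.Ioo 0 ε, κ * w t - (M + |κ| * η) ≤ t * (⟪y t, y' t⟫_ℝ / w t) := by
    intro t ht
    rw [← mul_div_assoc, ← real_inner_smul_right, hode t ht]
    exact mul_sqrt_norm_sq_add_sq_sub_le_inner_div hη (hβ t ht) (he t ht)
  refine monotoneOn_of_deriv_nonneg (convex_Ioo 0 ε)
    (fun t ht ↦ (hderiv t ht).continuousAt.continuousWithinAt)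
    (fun t ht ↦ (hderiv t (interior_subset ht)).differentiableAt.differentiableWithinAt)
    (fun t ht ↦ ?_)
  rw [interior_Ioo] at ht
  have hpow : t ^ (-κ) = t * t ^ (-κ - 1) := by
    rw [mul_comm, ← rpow_add_one ht.1.ne', sub_add_cancel]
  rw [(hderiv t ht).deriv, hpow]
  calc 0 ≤ (t * (⟪y t, y' t⟫_ℝ / w t) - (κ * w t - (M + |κ| * η))) * t ^ (-κ - 1) :=
        mul_nonneg (sub_nonneg.2 (hgrowth t ht)) (rpow_nonneg ht.1.le _)
    _ = _ := by field_simp; ring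

/-- The norm need not be differentiable where `y` vanishes, so the inequality is obtained for
`√(‖y‖² + η²)` first, and then `η → 0`. -/
lemma monotoneOn_norm_sub_mul_rpow {κ M ε : ℝ} (hκ : κ ≠ 0)
    (hy : ∀ t ∈ Set.Ioo 0 ε, HasDerivAt y (y' t) t)
    (hode : ∀ t ∈ Set.Ioo 0 ε, t • y' t = β t • y t + e t)
    (hβ : ∀ t ∈ Set.Ioo 0 ε, κ ≤ β t) (he : ∀ t ∈ Set.Ioo 0 ε, ‖e t‖ ≤ M) :
    MonotoneOn (fun t ↦ (‖y t‖ - M / κ) * t ^ (-κ)) (Set.Ioo 0 ε) := by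
  intro t ht s hs hts
  have hlim : ∀ r, Tendsto (fun η ↦ (√(‖y r‖ ^ 2 + η ^ 2) - (M + |κ| * η) / κ) * r ^ (-κ))
      (𝓝[>] 0) (𝓝 ((‖y r‖ - M / κ) * r ^ (-κ))) := fun r ↦ by
    have hcont : Continuous fun η ↦ (√(‖y r‖ ^ 2 + η ^ 2) - (M + |κ| * η) / κ) * r ^ (-κ) := by
      fun_prop
    simpa using (hcont.tendsto 0).mono_left nhdsWithin_le_nhds
  refine le_of_tendsto_of_tendsto (hlim t) (hlim s) ?_
  filter_upwards [self_mem_nhdsWithin] with η hη using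
    monotoneOn_sqrt_norm_sq_add_sq_sub_mul_rpow hκ hη hy hode hβ he ht hs hts

lemma isBigO_rpow_neg_of_linear_ode {k : ℝ} (hk : 0 < k)
    (hy : ∀ᶠ t in 𝓝[>] (0 : ℝ), HasDerivAt y (y' t) t)
    (hode : ∀ᶠ t in 𝓝[>] (0 : ℝ), t • y' t = β t • y t + e t)
    (hβ : ∀ᶠ t in 𝓝[>] (0 : ℝ), -k ≤ β t) (he : e =O[𝓝[>] 0] (fun _ ↦ (1 : ℝ))) :
    y =O[𝓝[>] 0] (fun t : ℝ ↦ t ^ (-k)) := by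
  obtain ⟨M, hM, hbound⟩ := he.exists_pos
  obtain ⟨ε, hε, hsub⟩ :=
    mem_nhdsGT_iff_exists_Ioo_subset.1 (hy.and (hode.and (hβ.and hbound.bound)))
  have hmono := monotoneOn_norm_sub_mul_rpow (neg_ne_zero.2 hk.ne') (fun t ht ↦ (hsub ht).1)
    (fun t ht ↦ (hsub ht).2.1) (fun t ht ↦ (hsub ht).2.2.1) (M := M)
    (fun t ht ↦ by simpa using (hsub ht).2.2.2)
  obtain ⟨s, hs⟩ : (Set.Ioo 0 ε).Nonempty := Set.nonempty_Ioo.2 hε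
  refine .of_bound ((‖y s‖ + M / k) * s ^ k) ?_
  filter_upwards [Ioo_mem_nhdsGT hs.1] with t ht
  have htk : 0 < t ^ k := rpow_pos_of_pos ht.1 k
  have hle := hmono ⟨ht.1, ht.2.trans hs.2⟩ hs ht.2.le
  simp only [neg_neg, div_neg, sub_neg_eq_add] at hle
  have hMk : 0 ≤ M / k := by positivity
  rw [norm_of_nonneg (rpow_nonneg ht.1.le _), rpow_neg ht.1.le, ← div_eq_mul_inv,
    le_div_iff₀ htk]
  refine le_trans ?_ hle
  gcongr
  exact le_add_of_nonneg_right hMk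

lemma tendsto_zero_of_linear_ode {k : ℝ} (hk : 0 < k)
    (hy : ∀ᶠ t in 𝓝[>] (0 : ℝ), HasDerivAt y (y' t) t)
    (hode : ∀ᶠ t in 𝓝[>] (0 : ℝ), t • y' t = β t • y t + e t)
    (hβ : ∀ᶠ t in 𝓝[>] (0 : ℝ), k ≤ β t) (he : Tendsto e (𝓝[>] 0) (𝓝 0)) :
    Tendsto y (𝓝[>] 0) (𝓝 0) := by
  rw [Metric.tendsto_nhds]
  intro r hr
  have he' : ∀ᶠ t in 𝓝[>] (0 : ℝ), ‖e t‖ ≤ k * (r / 2) :=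
    he.norm.eventually_le_const (by rw [norm_zero]; positivity)
  obtain ⟨ε, hε, hsub⟩ :=
    mem_nhdsGT_iff_exists_Ioo_subset.1 (hy.and (hode.and (hβ.and he')))
  have hmono := monotoneOn_norm_sub_mul_rpow hk.ne' (fun t ht ↦ (hsub ht).1)
    (fun t ht ↦ (hsub ht).2.1) (fun t ht ↦ (hsub ht).2.2.1) (fun t ht ↦ (hsub ht).2.2.2)
  rw [mul_div_cancel_left₀ _ hk.ne'] at hmono
  obtain ⟨s, hs⟩ : (Set.Ioo 0 ε).Nonempty := Set.nonempty_Ioo.2 hε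
  have hsmall : ∀ᶠ t in 𝓝[>] (0 : ℝ), (‖y s‖ - r / 2) * s ^ (-k) * t ^ k < r / 2 := by
    have := (tendsto_rpow_nhdsGT_zero hk).const_mul ((‖y s‖ - r / 2) * s ^ (-k))
    exact this.eventually_lt_const (by rw [mul_zero]; positivity)
  filter_upwards [hsmall, Ioo_mem_nhdsGT hs.1] with t hlt ht
  have hle := hmono ⟨ht.1, ht.2.trans hs.2⟩ hs ht.2.le
  simp only [rpow_neg ht.1.le, ← div_eq_mul_inv] at hle
  rw [div_le_iff₀ (rpow_pos_of_pos ht.1 k)] at hle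
  rw [dist_zero_right]
  linarith

lemma tendsto_of_linear_ode {σ : ℝ} {h : F} (hσ : 0 < σ)
    (hy : ∀ᶠ t in 𝓝[>] (0 : ℝ), HasDerivAt y (y' t) t)
    (hode : ∀ᶠ t in 𝓝[>] (0 : ℝ), t • y' t = β t • y t + e t)
    (hβ : Tendsto β (𝓝[>] 0) (𝓝 σ)) (he : Tendsto e (𝓝[>] 0) (𝓝 h)) :
    Tendsto y (𝓝[>] 0) (𝓝 (-(σ⁻¹ • h))) := by
  have hforce : Tendsto (fun t ↦ e t - β t • σ⁻¹ • h) (𝓝[>] 0) (𝓝 0) := by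
    simpa [smul_smul, mul_inv_cancel₀ hσ.ne'] using he.sub (hβ.smul_const (σ⁻¹ • h))
  have hzero := tendsto_zero_of_linear_ode (y := fun t ↦ y t + σ⁻¹ • h) (half_pos hσ)
    (hy.mono fun t ht ↦ ht.add_const _) (hode.mono fun t ht ↦ by rw [ht]; module)
    (hβ.eventually_const_le (half_lt_self hσ)) hforce
  simpa using hzero.sub_const (σ⁻¹ • h)

end LinearODE

section Sin

lemma eventually_sin_pos_nhdsGT_zero : ∀ᶠ t in 𝓝[>] (0 : ℝ), 0 < sin t := by
  filter_upwards [Ioo_mem_nhdsGT pi_pos] with t ht using sin_pos_of_mem_Ioo ht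

lemma isEquivalent_sin_nhdsGT_zero : sin ~[𝓝[>] 0] id :=
  isEquivalent_sin.mono nhdsWithin_le_nhds

lemma isTheta_sin_rpow (r : ℝ) : (fun t ↦ sin t ^ r) =Θ[𝓝[>] 0] (fun t : ℝ ↦ t ^ r) :=
  isEquivalent_sin_nhdsGT_zero.isTheta.rpow (eventually_sin_pos_nhdsGT_zero.mono fun _ ↦ le_of_lt)
    (eventually_mem_nhdsWithin.mono fun _ ht ↦ le_of_lt ht)

lemma isBigO_sin_rpow_one : sin =O[𝓝[>] 0] (fun t : ℝ ↦ t ^ (1 : ℝ)) := by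
  simpa using (isTheta_sin_rpow 1).isBigO

lemma isBigO_inv_sin : (fun t ↦ (sin t)⁻¹) =O[𝓝[>] 0] (fun t : ℝ ↦ t ^ (-1 : ℝ)) := by
  simpa [rpow_neg_one] using (isTheta_sin_rpow (-1)).isBigO

lemma tendsto_div_sin_nhdsGT_zero : Tendsto (fun t ↦ t / sin t) (𝓝[>] 0) (𝓝 1) :=
  (isEquivalent_iff_tendsto_one (eventually_sin_pos_nhdsGT_zero.mono fun _ ↦ ne_of_gt)).1
    isEquivalent_sin_nhdsGT_zero.symm

lemma isBigO_cos_sub_one : (fun t ↦ cos t - 1) =O[𝓝[>] 0] (fun t : ℝ ↦ t ^ (2 : ℝ)) := by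
  refine .of_bound (1 / 2) (.of_forall fun t ↦ ?_)
  rw [rpow_two, norm_eq_abs, norm_eq_abs, abs_sq, abs_sub_comm, abs_of_nonneg]
  · linarith [one_sub_sq_div_two_le_cos (x := t)]
  · linarith [cos_le_one t]

end Sin

/-- The first-order system satisfied near the pole by the profile `a` of the radial component of an
axisymmetric flow, as functions of the polar distance `t`: with `b` and `g` the profiles of the
polar and azimuthal components and `P` that of the pressure, `B = sin t * b`, `Φ = sin t * g`,
`H = g' + cot t * g`, `q = P - a + (b ^ 2 + g ^ 2) / 2` and `K = sin t * a' - B * a - 2 * B`. -/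
structure PolarSystem (a B Φ H q K : ℝ → ℝ) (t : ℝ) : Prop where
  hasDerivAt_a : HasDerivAt a ((B t * a t + 2 * B t + K t) / sin t) t
  hasDerivAt_B : HasDerivAt B (-(sin t * a t)) t
  hasDerivAt_Φ : HasDerivAt Φ (sin t * H t) t
  hasDerivAt_H : HasDerivAt H (B t * H t / sin t) t
  hasDerivAt_q : HasDerivAt q (Φ t * H t / sin t) t
  hasDerivAt_K : HasDerivAt K (-2 * sin t * q t) t

section PolarSystem

variable {a B Φ H q K : ℝ → ℝ} {τ κ : ℝ}

lemma eventually_neg_le_div_sin_mul (hτκ : τ < κ) (hB : Tendsto B (𝓝[>] 0) (𝓝 (-τ))) :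
    ∀ᶠ t in 𝓝[>] (0 : ℝ), -κ ≤ t / sin t * B t :=
  (tendsto_div_sin_nhdsGT_zero.mul hB).eventually_const_le (by linarith)

lemma PolarSystem.isBigO_H (hsys : ∀ᶠ t in 𝓝[>] (0 : ℝ), PolarSystem a B Φ H q K t)
    (hB : Tendsto B (𝓝[>] 0) (𝓝 (-τ))) (hκ : 0 < κ) (hτκ : τ < κ) :
    H =O[𝓝[>] 0] (fun t : ℝ ↦ t ^ (-κ)) := by
  refine isBigO_rpow_neg_of_linear_ode (e := 0) hκ (hsys.mono fun t ht ↦ ht.hasDerivAt_H)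
    (.of_forall fun t ↦ ?_) (eventually_neg_le_div_sin_mul hτκ hB) (isBigO_zero _ _)
  simp only [smul_eq_mul, Pi.zero_apply]
  ring

lemma PolarSystem.exists_tendsto_Φ (hsys : ∀ᶠ t in 𝓝[>] (0 : ℝ), PolarSystem a B Φ H q K t)
    (hB : Tendsto B (𝓝[>] 0) (𝓝 (-τ))) (hτ2 : τ < 2) :
    ∃ L, Tendsto Φ (𝓝[>] 0) (𝓝 L) := by
  obtain ⟨κ, hτκ, hκ2⟩ := exists_between (max_lt hτ2 two_pos)
  obtain ⟨hτκ, hκ⟩ := max_lt_iff.1 hτκ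
  have hα : 0 < 2 - κ := sub_pos.2 hκ2
  obtain ⟨L, hL⟩ := exists_sub_isBigO_rpow hα (hsys.mono fun t ht ↦ ht.hasDerivAt_Φ)
    (isBigO_mul_rpow (by ring) isBigO_sin_rpow_one (isBigO_H hsys hB hκ hτκ))
  exact ⟨L, tendsto_of_sub_isBigO_rpow hα hL⟩

lemma PolarSystem.isBigO_q (hsys : ∀ᶠ t in 𝓝[>] (0 : ℝ), PolarSystem a B Φ H q K t)
    (hB : Tendsto B (𝓝[>] 0) (𝓝 (-τ))) (hκ : 0 < κ) (hτκ : τ < κ) (hκ2 : κ < 2) :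
    q =O[𝓝[>] 0] (fun t : ℝ ↦ t ^ (-κ)) := by
  obtain ⟨L, hL⟩ := exists_tendsto_Φ hsys hB (hτκ.trans hκ2)
  refine isBigO_rpow_neg_of_deriv hκ (hsys.mono fun t ht ↦ ht.hasDerivAt_q) ?_
  have hΦH := isBigO_mul_rpow (zero_add (-κ)) (by simpa using hL.isBigO_one ℝ)
    (isBigO_H hsys hB hκ hτκ)
  simpa only [div_eq_mul_inv] using isBigO_mul_rpow (sub_eq_add_neg _ _).symm hΦH isBigO_inv_sin

lemma PolarSystem.exists_tendsto_K (hsys : ∀ᶠ t in 𝓝[>] (0 : ℝ), PolarSystem a B Φ H q K t)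
    (hB : Tendsto B (𝓝[>] 0) (𝓝 (-τ))) (hκ : 0 < κ) (hτκ : τ < κ) (hκ2 : κ < 2) :
    ∃ k, Tendsto K (𝓝[>] 0) (𝓝 k) := by
  have hα : 0 < 2 - κ := sub_pos.2 hκ2
  obtain ⟨k, hk⟩ := exists_sub_isBigO_rpow hα (hsys.mono fun t ht ↦ ht.hasDerivAt_K)
    (isBigO_mul_rpow (by ring) (isBigO_sin_rpow_one.const_mul_left (-2))
      (isBigO_q hsys hB hκ hτκ hκ2))
  exact ⟨k, tendsto_of_sub_isBigO_rpow hα hk⟩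

lemma PolarSystem.exists_tendsto_forcing
    (hsys : ∀ᶠ t in 𝓝[>] (0 : ℝ), PolarSystem a B Φ H q K t)
    (hB : Tendsto B (𝓝[>] 0) (𝓝 (-τ))) (hκ : 0 < κ) (hτκ : τ < κ) (hκ2 : κ < 2) :
    ∃ f, Tendsto (fun t ↦ 2 * B t + K t) (𝓝[>] 0) (𝓝 f) := by
  obtain ⟨k, hk⟩ := exists_tendsto_K hsys hB hκ hτκ hκ2
  exact ⟨_, (hB.const_mul 2).add hk⟩

lemma PolarSystem.linear_ode_a (t : ℝ) :
    t • ((B t * a t + 2 * B t + K t) / sin t) =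
      (t / sin t * B t) • a t + t / sin t * (2 * B t + K t) := by
  simp only [smul_eq_mul]
  ring

lemma PolarSystem.exists_tendsto_a_of_neg
    (hsys : ∀ᶠ t in 𝓝[>] (0 : ℝ), PolarSystem a B Φ H q K t)
    (hB : Tendsto B (𝓝[>] 0) (𝓝 (-τ))) (hτ : τ < 0) :
    ∃ L, Tendsto a (𝓝[>] 0) (𝓝 L) := by
  obtain ⟨f, hf⟩ := exists_tendsto_forcing hsys hB one_pos (hτ.trans one_pos) one_lt_two
  exact ⟨_, tendsto_of_linear_ode (neg_pos.2 hτ) (hsys.mono fun t ht ↦ ht.hasDerivAt_a)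
    (.of_forall linear_ode_a) (by simpa using tendsto_div_sin_nhdsGT_zero.mul hB)
    (tendsto_div_sin_nhdsGT_zero.mul hf)⟩

lemma PolarSystem.isBigO_a (hsys : ∀ᶠ t in 𝓝[>] (0 : ℝ), PolarSystem a B Φ H q K t)
    (hB : Tendsto B (𝓝[>] 0) (𝓝 (-τ))) (hκ : 0 < κ) (hτκ : τ < κ) (hκ2 : κ < 2) :
    a =O[𝓝[>] 0] (fun t : ℝ ↦ t ^ (-κ)) := by
  obtain ⟨f, hf⟩ := exists_tendsto_forcing hsys hB hκ hτκ hκ2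
  exact isBigO_rpow_neg_of_linear_ode hκ (hsys.mono fun t ht ↦ ht.hasDerivAt_a)
    (.of_forall linear_ode_a) (eventually_neg_le_div_sin_mul hτκ hB)
    ((tendsto_div_sin_nhdsGT_zero.mul hf).isBigO_one ℝ)

lemma PolarSystem.isBigO_B_add (hsys : ∀ᶠ t in 𝓝[>] (0 : ℝ), PolarSystem a B Φ H q K t)
    (hB : Tendsto B (𝓝[>] 0) (𝓝 (-τ))) (hκ : 0 < κ) (hτκ : τ < κ) (hκ2 : κ < 2) :
    (fun t ↦ B t + τ) =O[𝓝[>] 0] (fun t : ℝ ↦ t ^ (2 - κ)) := by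
  have hα : 0 < 2 - κ := sub_pos.2 hκ2
  obtain ⟨L, hL⟩ := exists_sub_isBigO_rpow hα (hsys.mono fun t ht ↦ ht.hasDerivAt_B)
    (isBigO_mul_rpow (by ring) isBigO_sin_rpow_one (isBigO_a hsys hB hκ hτκ hκ2)).neg_left
  obtain rfl := tendsto_nhds_unique (tendsto_of_sub_isBigO_rpow hα hL) hB
  simpa using hL

lemma PolarSystem.hasDerivAt_sin_rpow_mul_a {t : ℝ} (hsys : PolarSystem a B Φ H q K t)
    (ht : 0 < sin t) :
    HasDerivAt (fun t ↦ sin t ^ τ * a t)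
      (sin t ^ (τ - 1) * ((B t + τ + τ * (cos t - 1)) * a t + (2 * B t + K t))) t := by
  refine (((hasDerivAt_sin t).rpow_const (Or.inl ht.ne')).mul hsys.hasDerivAt_a).congr_deriv ?_
  rw [rpow_sub_one ht.ne']
  field_simp
  ring

/-- The exponent `κ` is chosen in `(τ, 1 + τ / 2)`: then `(sin t ^ τ * a)'` is a sum of terms of
orders `τ - 1` and `τ + 1 - 2 * κ`, both larger than `-1`. -/
lemma PolarSystem.exists_tendsto_sin_rpow_mul_a_of_pos
    (hsys : ∀ᶠ t in 𝓝[>] (0 : ℝ), PolarSystem a B Φ H q K t)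
    (hB : Tendsto B (𝓝[>] 0) (𝓝 (-τ))) (hτ : 0 < τ) (hτ2 : τ < 2) :
    ∃ L, Tendsto (fun t ↦ sin t ^ τ * a t) (𝓝[>] 0) (𝓝 L) := by
  obtain ⟨κ, hτκ, hκτ⟩ : ∃ κ, τ < κ ∧ κ < 1 + τ / 2 := exists_between (by linarith)
  have hκ : 0 < κ := hτ.trans hτκ
  have hκ2 : κ < 2 := by linarith
  obtain ⟨f, hf⟩ := exists_tendsto_forcing hsys hB hκ hτκ hκ2
  set γ : ℝ := min (2 - 2 * κ) 0 with hγ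
  have hα : 0 < τ + γ := by
    rw [hγ, ← min_add_add_left]
    exact lt_min (by linarith) (by linarith)
  have hcoef : (fun t ↦ B t + τ + τ * (cos t - 1)) =O[𝓝[>] 0] (fun t : ℝ ↦ t ^ (2 - κ)) :=
    (isBigO_B_add hsys hB hκ hτκ hκ2).add <| (isBigO_cos_sub_one.const_mul_left τ).trans <|
      isBigO_rpow_rpow_nhdsGT_zero_of_le (by linarith)
  have hquad : (fun t ↦ (B t + τ + τ * (cos t - 1)) * a t) =O[𝓝[>] 0] (fun t : ℝ ↦ t ^ γ) :=
    (isBigO_mul_rpow (by ring) hcoef (isBigO_a hsys hB hκ hτκ hκ2)).trans <|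
      isBigO_rpow_rpow_nhdsGT_zero_of_le (min_le_left _ _)
  have hforce : (fun t ↦ 2 * B t + K t) =O[𝓝[>] 0] (fun t : ℝ ↦ t ^ γ) :=
    (hf.isBigO_one ℝ).trans <| by
      simpa using isBigO_rpow_rpow_nhdsGT_zero_of_le (min_le_right (2 - 2 * κ) 0)
  obtain ⟨L, hL⟩ := exists_sub_isBigO_rpow hα
    ((hsys.and eventually_sin_pos_nhdsGT_zero).mono fun t ht ↦ ht.1.hasDerivAt_sin_rpow_mul_a ht.2)
    (isBigO_mul_rpow (by ring) (isTheta_sin_rpow (τ - 1)).isBigO (hquad.add hforce))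
  exact ⟨L, tendsto_of_sub_isBigO_rpow hα hL⟩

lemma PolarSystem.exists_tendsto_sin_rpow_mul_a
    (hsys : ∀ᶠ t in 𝓝[>] (0 : ℝ), PolarSystem a B Φ H q K t)
    (hB : Tendsto B (𝓝[>] 0) (𝓝 (-τ))) (hτ2 : τ < 2) (hτ0 : τ ≠ 0) :
    ∃ L, Tendsto (fun t ↦ sin t ^ max τ 0 * a t) (𝓝[>] 0) (𝓝 L) := by
  rcases hτ0.lt_or_gt with hτ | hτ
  · simpa [max_eq_right hτ.le] using exists_tendsto_a_of_neg hsys hB hτ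
  · simpa [max_eq_left hτ.le] using exists_tendsto_sin_rpow_mul_a_of_pos hsys hB hτ hτ2

end PolarSystem

/-- The Navier–Stokes equations at polar distance `t` from the south pole for a `(-1)`-homogeneous
axisymmetric flow, restricted to the unit sphere. The profiles `a`, `b`, `g` are the components of
the velocity along the radial, polar and azimuthal frame vectors (so that `b = -u_θ`), and `P` is
the pressure. -/
structure MeridianEq (a b g P : ℝ → ℝ) (t : ℝ) : Prop where
  contDiffAt_a : ContDiffAt ℝ 2 a t
  contDiffAt_b : ContDiffAt ℝ 2 b t
  contDiffAt_g : ContDiffAt ℝ 2 g t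
  differentiableAt_P : DifferentiableAt ℝ P t
  div : a t + deriv b t + cot t * b t = 0
  radial : deriv (deriv a) t + cot t * deriv a t - 2 * (a t + deriv b t + cot t * b t) =
    -a t ^ 2 + b t * deriv a t - b t ^ 2 - g t ^ 2 - 2 * P t
  polar : deriv (deriv b) t + cot t * deriv b t - b t / sin t ^ 2 + 2 * deriv a t =
    b t * deriv b t - cot t * g t ^ 2 + deriv P t
  azimuthal : deriv (deriv g) t + cot t * deriv g t - g t / sin t ^ 2 =
    b t * deriv g t + cot t * b t * g t

section MeridianEq

variable {a b g P : ℝ → ℝ} {t : ℝ}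

lemma hasDerivAt_deriv_of_contDiffAt {E : Type*} [NormedAddCommGroup E] [NormedSpace ℝ E]
    {f : ℝ → E} (hf : ContDiffAt ℝ 2 f t) : HasDerivAt (deriv f) (deriv (deriv f) t) t :=
  ((ContDiffAt.derivWithin hf (m := 1) le_rfl).differentiableAt one_ne_zero).hasDerivAt

lemma hasDerivAt_cot (ht : sin t ≠ 0) : HasDerivAt cot (-(1 / sin t ^ 2)) t := by
  have h := (hasDerivAt_cos t).div (hasDerivAt_sin t) ht
  refine (h.congr_of_eventuallyEq (.of_forall cot_eq_cos_div_sin)).congr_deriv ?_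
  rw [← neg_div]
  congr 1
  linear_combination -sin_sq_add_cos_sq t

lemma deriv_deriv_of_div (hdiv : ∀ᶠ s in 𝓝 t, a s + deriv b s + cot s * b s = 0)
    (ha : DifferentiableAt ℝ a t) (hb : ContDiffAt ℝ 2 b t) (ht : sin t ≠ 0) :
    deriv (deriv b) t + cot t * deriv b t - b t / sin t ^ 2 = -deriv a t := by
  have hderiv := (ha.hasDerivAt.add (hasDerivAt_deriv_of_contDiffAt hb)).add
    ((hasDerivAt_cot ht).mul (hb.differentiableAt two_ne_zero).hasDerivAt)
  have hzero := hderiv.unique ((hasDerivAt_const t (0 : ℝ)).congr_of_eventuallyEq hdiv)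
  linear_combination hzero

lemma MeridianEq.polarSystem (h : MeridianEq a b g P t)
    (hdiv : ∀ᶠ s in 𝓝 t, a s + deriv b s + cot s * b s = 0) (ht : sin t ≠ 0) :
    PolarSystem a (fun t ↦ sin t * b t) (fun t ↦ sin t * g t) (fun t ↦ deriv g t + cot t * g t)
      (fun t ↦ P t - a t + (b t ^ 2 + g t ^ 2) / 2)
      (fun t ↦ sin t * deriv a t - sin t * b t * a t - 2 * (sin t * b t)) t := by
  have ha := h.contDiffAt_a.differentiableAt two_ne_zero
  have hb := (h.contDiffAt_b.differentiableAt two_ne_zero).hasDerivAt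
  have hg := (h.contDiffAt_g.differentiableAt two_ne_zero).hasDerivAt
  have hbb := deriv_deriv_of_div hdiv ha h.contDiffAt_b ht
  have hdiv' := h.div
  have hradial := h.radial
  have hpolar := h.polar
  have hazim := h.azimuthal
  have hcot : cot t * sin t = cos t := by rw [cot_eq_cos_div_sin, div_mul_cancel₀ _ ht]
  have hB : HasDerivAt (fun t ↦ sin t * b t) (-(sin t * a t)) t := by
    refine ((hasDerivAt_sin t).mul hb).congr_deriv ?_
    linear_combination sin t * hdiv' - b t * hcot
  refine ⟨?_, hB, ?_, ?_, ?_, ?_⟩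
  · refine ha.hasDerivAt.congr_deriv ?_
    field_simp
    ring
  · refine ((hasDerivAt_sin t).mul hg).congr_deriv ?_
    linear_combination -g t * hcot
  · refine ((hasDerivAt_deriv_of_contDiffAt h.contDiffAt_g).add
      ((hasDerivAt_cot ht).mul hg)).congr_deriv ?_
    field_simp
    field_simp at hazim
    linear_combination hazim
  · refine ((h.differentiableAt_P.hasDerivAt.sub ha.hasDerivAt).add
      (((hb.pow 2).add (hg.pow 2)).div_const 2)).congr_deriv ?_
    rw [mul_assoc (sin t), mul_div_cancel_left₀ _ ht]
    simp only [Nat.cast_ofNat, Nat.add_one_sub_one, pow_one]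
    linear_combination hbb - hpolar
  · refine (((hasDerivAt_sin t).mul (hasDerivAt_deriv_of_contDiffAt h.contDiffAt_a)).sub
      (hB.mul ha.hasDerivAt)).sub (hB.const_mul 2) |>.congr_deriv ?_
    linear_combination sin t * hradial - deriv a t * hcot + 2 * sin t * hdiv'

lemma eventually_polarSystem (h : ∀ᶠ t in 𝓝[>] (0 : ℝ), MeridianEq a b g P t) :
    ∀ᶠ t in 𝓝[>] (0 : ℝ),
      PolarSystem a (fun t ↦ sin t * b t) (fun t ↦ sin t * g t) (fun t ↦ deriv g t + cot t * g t)
        (fun t ↦ P t - a t + (b t ^ 2 + g t ^ 2) / 2)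
        (fun t ↦ sin t * deriv a t - sin t * b t * a t - 2 * (sin t * b t)) t := by
  filter_upwards [h, eventually_eventually_nhdsWithin.2 h, eventually_sin_pos_nhdsGT_zero,
    self_mem_nhdsWithin] with t ht hnear hsin htpos
  rw [isOpen_Ioi.nhdsWithin_eq htpos] at hnear
  exact ht.polarSystem (hnear.mono fun s hs ↦ hs.div) hsin.ne'

end MeridianEq

section Homogeneous

variable {E F : Type*} [NormedAddCommGroup E] [NormedSpace ℝ E] [NormedAddCommGroup F]
  [NormedSpace ℝ F] {f : E → F} {x : E} {m : ℤ}

lemma deriv_deriv_comp_of_contDiffAt {γ γ' : ℝ → E} {γ'' : E} {t : ℝ}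
    (hf : ContDiffAt ℝ 2 f (γ t)) (hγ : ∀ᶠ s in 𝓝 t, HasDerivAt γ (γ' s) s)
    (hγ' : HasDerivAt γ' γ'' t) :
    deriv (deriv fun s ↦ f (γ s)) t =
      fderiv ℝ (fderiv ℝ f) (γ t) (γ' t) (γ' t) + fderiv ℝ f (γ t) γ'' := by
  have hγt := hγ.self_of_nhds
  have hderiv : deriv (fun s ↦ f (γ s)) =ᶠ[𝓝 t] fun s ↦ fderiv ℝ f (γ s) (γ' s) := by
    filter_upwards [hγ, hγt.continuousAt.eventually (hf.eventually (by decide))] with s hs hfs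
    exact ((hfs.differentiableAt two_ne_zero).hasFDerivAt.comp_hasDerivAt s hs).deriv
  have hff : HasFDerivAt (fderiv ℝ f) (fderiv ℝ (fderiv ℝ f) (γ t)) (γ t) :=
    ((hf.fderiv_right (m := 1) le_rfl).differentiableAt one_ne_zero).hasFDerivAt
  rw [hderiv.deriv_eq]
  exact ((hff.comp_hasDerivAt t hγt).clm_apply hγ').deriv

lemma fderiv_apply_self_of_homogeneous (hf : DifferentiableAt ℝ f x)
    (hom : ∀ᶠ r : ℝ in 𝓝 1, f (r • x) = r ^ m • f x) : fderiv ℝ f x x = (m : ℝ) • f x := by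
  have hray : HasDerivAt (fun r : ℝ ↦ r • x) x 1 := by
    simpa using (hasDerivAt_id (1 : ℝ)).smul_const x
  have hf' : HasFDerivAt f (fderiv ℝ f x) ((1 : ℝ) • x) := by simpa using hf.hasFDerivAt
  have hpow : HasDerivAt (fun r : ℝ ↦ r ^ m • f x) ((m : ℝ) • f x) 1 := by
    simpa using (hasDerivAt_zpow m (1 : ℝ) (Or.inl one_ne_zero)).smul_const (f x)
  exact (hf'.comp_hasDerivAt 1 hray).unique (hpow.congr_of_eventuallyEq hom)

lemma fderiv_fderiv_apply_self_of_homogeneous (hf : ContDiffAt ℝ 2 f x)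
    (hom : ∀ᶠ r : ℝ in 𝓝 1, f (r • x) = r ^ m • f x) :
    fderiv ℝ (fderiv ℝ f) x x x = ((m * (m - 1) : ℤ) : ℝ) • f x := by
  have hray : ∀ r : ℝ, HasDerivAt (fun r : ℝ ↦ r • x) x r := fun r ↦ by
    simpa using (hasDerivAt_id r).smul_const x
  have hcurve := deriv_deriv_comp_of_contDiffAt (γ := fun r : ℝ ↦ r • x) (t := 1)
    (by simpa using hf) (.of_forall hray) (hasDerivAt_const 1 x)
  have hpow : deriv (fun r : ℝ ↦ r ^ m • f x) =ᶠ[𝓝 1] fun r ↦ (m * r ^ (m - 1)) • f x := by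
    filter_upwards [eventually_ne_nhds one_ne_zero] with r hr
    exact ((hasDerivAt_zpow m r (Or.inl hr)).smul_const (f x)).deriv
  rw [EventuallyEq.deriv_eq (EventuallyEq.deriv hom), hpow.deriv_eq,
    (((hasDerivAt_zpow (m - 1) (1 : ℝ) (Or.inl one_ne_zero)).const_mul (m : ℝ)).smul_const
      (f x)).deriv] at hcurve
  simpa using hcurve.symm

end Homogeneous

section Frame

/-- The point of the unit sphere at angle `t` from the south pole on the meridian of angle `φ`. -/
def radialVec (t φ : ℝ) : V3 := !₂[sin t * cos φ, sin t * sin φ, -cos t]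

/-- The unit tangent vector to the meridian of angle `φ` pointing away from the south pole; it is
`-e_θ`. -/
def polarVec (t φ : ℝ) : V3 := !₂[cos t * cos φ, cos t * sin φ, sin t]

/-- The unit tangent vector `e_φ` to the circles of latitude. -/
def azimVec (φ : ℝ) : V3 := !₂[-sin φ, cos φ, 0]

lemma hasDerivAt_vec3 {f₀ f₁ f₂ : ℝ → ℝ} {f₀' f₁' f₂' s : ℝ} (h₀ : HasDerivAt f₀ f₀' s)
    (h₁ : HasDerivAt f₁ f₁' s) (h₂ : HasDerivAt f₂ f₂' s) :
    HasDerivAt (fun s ↦ (!₂[f₀ s, f₁ s, f₂ s] : V3)) !₂[f₀', f₁', f₂'] s := by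
  have hpi : HasDerivAt (fun s ↦ ![f₀ s, f₁ s, f₂ s]) ![f₀', f₁', f₂'] s :=
    hasDerivAt_pi.2 fun i ↦ by fin_cases i <;> simpa
  exact (EuclideanSpace.equiv (Fin 3) ℝ).symm.toContinuousLinearMap.hasFDerivAt.comp_hasDerivAt
    s hpi

lemma hasDerivAt_radialVec_polar (t φ : ℝ) :
    HasDerivAt (fun t ↦ radialVec t φ) (polarVec t φ) t :=
  hasDerivAt_vec3 ((hasDerivAt_sin t).mul_const _) ((hasDerivAt_sin t).mul_const _)
    ((hasDerivAt_cos t).fun_neg.congr_deriv (neg_neg _))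

lemma hasDerivAt_polarVec_polar (t φ : ℝ) :
    HasDerivAt (fun t ↦ polarVec t φ) (-radialVec t φ) t :=
  (hasDerivAt_vec3 ((hasDerivAt_cos t).mul_const _) ((hasDerivAt_cos t).mul_const _)
    (hasDerivAt_sin t)).congr_deriv <| by ext i; fin_cases i <;> simp [radialVec]

lemma hasDerivAt_radialVec_azim (t φ : ℝ) :
    HasDerivAt (fun φ ↦ radialVec t φ) (sin t • azimVec φ) φ :=
  (hasDerivAt_vec3 ((hasDerivAt_cos φ).const_mul _) ((hasDerivAt_sin φ).const_mul _)
    (hasDerivAt_const φ _)).congr_deriv <| by ext i; fin_cases i <;> simp [azimVec]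

lemma hasDerivAt_polarVec_azim (t φ : ℝ) :
    HasDerivAt (fun φ ↦ polarVec t φ) (cos t • azimVec φ) φ :=
  (hasDerivAt_vec3 ((hasDerivAt_cos φ).const_mul _) ((hasDerivAt_sin φ).const_mul _)
    (hasDerivAt_const φ _)).congr_deriv <| by ext i; fin_cases i <;> simp [azimVec]

lemma hasDerivAt_azimVec (t φ : ℝ) :
    HasDerivAt azimVec (-(sin t • radialVec t φ + cos t • polarVec t φ)) φ :=
  (hasDerivAt_vec3 (hasDerivAt_sin φ).neg (hasDerivAt_cos φ) (hasDerivAt_const φ _)).congr_deriv <|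
    by ext i; fin_cases i <;> simp [radialVec, polarVec] <;> grind [sin_sq_add_cos_sq t]

lemma inner_vec3 (x y : V3) : ⟪x, y⟫_ℝ = x 0 * y 0 + x 1 * y 1 + x 2 * y 2 := by
  simp [PiLp.inner_apply, Fin.sum_univ_three, mul_comm]

lemma orthonormal_frame (t φ : ℝ) :
    Orthonormal ℝ ![radialVec t φ, polarVec t φ, azimVec φ] := by
  have ht := sin_sq_add_cos_sq t
  have hφ := sin_sq_add_cos_sq φ
  rw [orthonormal_iff_ite]
  intro i j
  rw [inner_vec3]
  fin_cases i <;> fin_cases j <;> simp [radialVec, polarVec, azimVec] <;> grind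

/-- The spherical frame `(e_r, -e_θ, e_φ)` at `radialVec t φ`. -/
def sphericalFrame (t φ : ℝ) : OrthonormalBasis (Fin 3) ℝ V3 :=
  OrthonormalBasis.mk (orthonormal_frame t φ)
    ((orthonormal_frame t φ).linearIndependent.span_eq_top_of_card_eq_finrank' (by simp)).ge

lemma coe_sphericalFrame (t φ : ℝ) :
    ⇑(sphericalFrame t φ) = ![radialVec t φ, polarVec t φ, azimVec φ] :=
  OrthonormalBasis.coe_mk _ _

variable {F : Type*} [NormedAddCommGroup F] [NormedSpace ℝ F] {f : V3 → F} {t φ : ℝ}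

lemma deriv_comp_radialVec_polar (hf : DifferentiableAt ℝ f (radialVec t φ)) :
    deriv (fun s ↦ f (radialVec s φ)) t = fderiv ℝ f (radialVec t φ) (polarVec t φ) :=
  (hf.hasFDerivAt.comp_hasDerivAt t (hasDerivAt_radialVec_polar t φ)).deriv

lemma deriv_comp_radialVec_azim (hf : DifferentiableAt ℝ f (radialVec t φ)) :
    deriv (fun ψ ↦ f (radialVec t ψ)) φ = sin t • fderiv ℝ f (radialVec t φ) (azimVec φ) := by
  rw [← map_smul]
  exact (hf.hasFDerivAt.comp_hasDerivAt φ (hasDerivAt_radialVec_azim t φ)).deriv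

lemma laplacian_eq_add_frame (x : V3) :
    Δ f x = fderiv ℝ (fderiv ℝ f) x (radialVec t φ) (radialVec t φ) +
      fderiv ℝ (fderiv ℝ f) x (polarVec t φ) (polarVec t φ) +
      fderiv ℝ (fderiv ℝ f) x (azimVec φ) (azimVec φ) := by
  simp [InnerProductSpace.laplacian_eq_iteratedFDeriv_orthonormalBasis f (sphericalFrame t φ),
    iteratedFDeriv_two_apply, Fin.sum_univ_three, coe_sphericalFrame]

lemma laplacian_radialVec_of_homogeneous {m : ℤ} (hf : ContDiffAt ℝ 2 f (radialVec t φ))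
    (hom : ∀ᶠ r : ℝ in 𝓝 1, f (r • radialVec t φ) = r ^ m • f (radialVec t φ))
    (ht : sin t ≠ 0) :
    Δ f (radialVec t φ) = ((m * (m + 1) : ℤ) : ℝ) • f (radialVec t φ) +
      deriv (deriv fun s ↦ f (radialVec s φ)) t + cot t • deriv (fun s ↦ f (radialVec s φ)) t +
      (sin t ^ 2)⁻¹ • deriv (deriv fun ψ ↦ f (radialVec t ψ)) φ := by
  have hdiff := hf.differentiableAt two_ne_zero
  have hradial := fderiv_apply_self_of_homogeneous hdiff hom
  have hpolar := deriv_deriv_comp_of_contDiffAt (γ := fun s ↦ radialVec s φ) hf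
    (.of_forall fun s ↦ hasDerivAt_radialVec_polar s φ) (hasDerivAt_polarVec_polar t φ)
  have hazim := deriv_deriv_comp_of_contDiffAt hf
    (.of_forall fun ψ ↦ hasDerivAt_radialVec_azim t ψ)
    ((hasDerivAt_azimVec t φ).const_smul (sin t))
  simp only [map_neg, map_smul, map_add, smul_add, smul_neg, hradial,
    FunLike.coe_smul, Pi.smul_apply] at hpolar hazim
  rw [laplacian_eq_add_frame (t := t) (φ := φ), fderiv_fderiv_apply_self_of_homogeneous hf hom,
    hpolar, hazim, deriv_comp_radialVec_polar hdiff, cot_eq_cos_div_sin]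
  match_scalars <;> field_simp <;> ring

end Frame

section NavierStokes

variable {u : V3 → V3} {p : V3 → ℝ} {x : V3}

lemma sum_smul_e3 (v : V3) : ∑ j, v j • e3 j = v := by
  simpa [e3] using (EuclideanSpace.basisFun (Fin 3) ℝ).sum_repr v

lemma pd_coord (hu : DifferentiableAt ℝ u x) (i j : Fin 3) :
    pd j (fun z ↦ u z i) x = fderiv ℝ u x (e3 j) i := by
  have h := (EuclideanSpace.proj (𝕜 := ℝ) i).hasFDerivAt.comp x hu.hasFDerivAt
  exact congrArg (· (e3 j)) h.fderiv

lemma lap3_coord (hu : ContDiffAt ℝ 2 u x) (i : Fin 3) : lap3 (fun z ↦ u z i) x = Δ u x i := by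
  have hcoord : ContDiffAt ℝ 2 (fun z ↦ u z i) x := (contDiffAt_euclidean.1 hu) i
  have hpd (j : Fin 3) : pd j (pd j fun z ↦ u z i) x =
      fderiv ℝ (fderiv ℝ fun z ↦ u z i) x (e3 j) (e3 j) := by
    have hD := ((hcoord.fderiv_right (m := 1) le_rfl).differentiableAt one_ne_zero).hasFDerivAt
    change fderiv ℝ (fun y ↦ fderiv ℝ (fun z ↦ u z i) y (e3 j)) x (e3 j) = _
    simp [(hD.clm_apply (hasFDerivAt_const (e3 j) x)).fderiv]
  have hproj := hu.laplacian_CLM_comp_left (l := EuclideanSpace.proj (𝕜 := ℝ) i)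
  calc lap3 (fun z ↦ u z i) x = Δ (fun z ↦ u z i) x := by
        simp [InnerProductSpace.laplacian_eq_iteratedFDeriv_orthonormalBasis _
          (EuclideanSpace.basisFun (Fin 3) ℝ), iteratedFDeriv_two_apply, lap3, hpd, e3]
    _ = Δ u x i := hproj

lemma NSEq.inner_laplacian (h : NSEq u p x) (hu : ContDiffAt ℝ 2 u x) (v : V3) :
    ⟪Δ u x, v⟫_ℝ = ⟪fderiv ℝ u x (u x), v⟫_ℝ + fderiv ℝ p x v := by
  have hconv (i : Fin 3) : ∑ j, u x j * pd j (fun z ↦ u z i) x = fderiv ℝ u x (u x) i := by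
    conv_rhs => rw [← sum_smul_e3 (u x)]
    simp [pd_coord (hu.differentiableAt two_ne_zero), map_sum]
  have hmom (i : Fin 3) : Δ u x i = fderiv ℝ u x (u x) i + fderiv ℝ p x (e3 i) := by
    have hi := h.1 i
    rw [lap3_coord hu, hconv, pd] at hi
    linear_combination -hi
  have hpv : fderiv ℝ p x v = ∑ i, v i * fderiv ℝ p x (e3 i) := by
    conv_lhs => rw [← sum_smul_e3 v]
    simp only [map_sum, map_smul, smul_eq_mul]
  simp only [hpv, inner_vec3, hmom, Fin.sum_univ_three]
  ring

lemma NSEq.sum_inner_fderiv (h : NSEq u p x) (hu : DifferentiableAt ℝ u x)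
    (b : OrthonormalBasis (Fin 3) ℝ V3) : ∑ i, ⟪b i, fderiv ℝ u x (b i)⟫_ℝ = 0 := by
  calc ∑ i, ⟪b i, fderiv ℝ u x (b i)⟫_ℝ = LinearMap.trace ℝ V3 (fderiv ℝ u x) :=
        (LinearMap.trace_eq_sum_inner _ b).symm
    _ = ∑ i, ⟪e3 i, fderiv ℝ u x (e3 i)⟫_ℝ := by
        simp [LinearMap.trace_eq_sum_inner _ (EuclideanSpace.basisFun (Fin 3) ℝ), e3]
    _ = ∑ i, pd i (fun z ↦ u z i) x := by
        simp [pd_coord hu, e3, EuclideanSpace.inner_single_left]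
    _ = 0 := h.2

end NavierStokes

section FrameVec

variable {a b g : ℝ → ℝ} {a' b' g' α β γ t φ : ℝ}

/-- The vector with components `α, β, γ` along the radial, polar and azimuthal frame vectors at
`radialVec t φ`. -/
def frameVec (α β γ t φ : ℝ) : V3 := α • radialVec t φ + β • polarVec t φ + γ • azimVec φ

lemma inner_radialVec_frameVec : ⟪radialVec t φ, frameVec α β γ t φ⟫_ℝ = α := by
  simpa [Fin.sum_univ_three, frameVec] using
    (orthonormal_frame t φ).inner_right_fintype ![α, β, γ] 0

lemma inner_polarVec_frameVec : ⟪polarVec t φ, frameVec α β γ t φ⟫_ℝ = β := by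
  simpa [Fin.sum_univ_three, frameVec] using
    (orthonormal_frame t φ).inner_right_fintype ![α, β, γ] 1

lemma inner_azimVec_frameVec : ⟪azimVec φ, frameVec α β γ t φ⟫_ℝ = γ := by
  simpa [Fin.sum_univ_three, frameVec] using
    (orthonormal_frame t φ).inner_right_fintype ![α, β, γ] 2

lemma hasDerivAt_frameVec_polar (ha : HasDerivAt a a' t) (hb : HasDerivAt b b' t)
    (hg : HasDerivAt g g' t) (φ : ℝ) :
    HasDerivAt (fun s ↦ frameVec (a s) (b s) (g s) s φ)
      (frameVec (a' - b t) (b' + a t) g' t φ) t := by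
  refine (((ha.smul (hasDerivAt_radialVec_polar t φ)).add
    (hb.smul (hasDerivAt_polarVec_polar t φ))).add (hg.smul_const (azimVec φ))).congr_deriv ?_
  unfold frameVec
  module

lemma hasDerivAt_frameVec_azim (α β γ t φ : ℝ) :
    HasDerivAt (fun ψ ↦ frameVec α β γ t ψ)
      (frameVec (-(γ * sin t)) (-(γ * cos t)) (α * sin t + β * cos t) t φ) φ := by
  refine ((((hasDerivAt_radialVec_azim t φ).const_smul α).add
    ((hasDerivAt_polarVec_azim t φ).const_smul β)).add
    ((hasDerivAt_azimVec t φ).const_smul γ)).congr_deriv ?_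
  unfold frameVec
  module

end FrameVec

/-- A `(-1)`-homogeneous axisymmetric Navier–Stokes flow, seen at the circle of the unit sphere at
polar distance `t` from the south pole: `a`, `b`, `g` are the components of the velocity `u` in the
spherical frame, and homogeneity is only required for dilations close to `1`. -/
structure MeridianFlow (u : V3 → V3) (p : V3 → ℝ) (a b g : ℝ → ℝ) (t : ℝ) : Prop where
  sin_pos : 0 < sin t
  contDiffAt_velocity (φ : ℝ) : ContDiffAt ℝ 2 u (radialVec t φ)
  differentiableAt_pressure (φ : ℝ) : DifferentiableAt ℝ p (radialVec t φ)
  velocity_smul (φ : ℝ) :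
    ∀ᶠ r : ℝ in 𝓝 1, u (r • radialVec t φ) = r ^ (-1 : ℤ) • u (radialVec t φ)
  pressure_smul (φ : ℝ) :
    ∀ᶠ r : ℝ in 𝓝 1, p (r • radialVec t φ) = r ^ (-2 : ℤ) • p (radialVec t φ)
  contDiffAt_a : ContDiffAt ℝ 2 a t
  contDiffAt_b : ContDiffAt ℝ 2 b t
  contDiffAt_g : ContDiffAt ℝ 2 g t
  velocity_eq : ∀ᶠ s in 𝓝 t, ∀ φ, u (radialVec s φ) = frameVec (a s) (b s) (g s) s φ
  navierStokes (φ : ℝ) : NSEq u p (radialVec t φ)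

namespace MeridianFlow

variable {u : V3 → V3} {p : V3 → ℝ} {a b g : ℝ → ℝ} {t : ℝ}

lemma velocity_radialVec (h : MeridianFlow u p a b g t) (φ : ℝ) :
    u (radialVec t φ) = frameVec (a t) (b t) (g t) t φ :=
  h.velocity_eq.self_of_nhds φ

lemma fderiv_velocity_radial (h : MeridianFlow u p a b g t) (φ : ℝ) :
    fderiv ℝ u (radialVec t φ) (radialVec t φ) = frameVec (-a t) (-b t) (-g t) t φ := by
  rw [fderiv_apply_self_of_homogeneous ((h.contDiffAt_velocity φ).differentiableAt two_ne_zero)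
    (h.velocity_smul φ), h.velocity_radialVec]
  unfold frameVec
  module

lemma deriv_velocity_polar (h : MeridianFlow u p a b g t) (φ : ℝ) :
    deriv (fun s ↦ u (radialVec s φ)) =ᶠ[𝓝 t]
      fun s ↦ frameVec (deriv a s - b s) (deriv b s + a s) (deriv g s) s φ := by
  filter_upwards [h.velocity_eq.eventually_nhds, h.contDiffAt_a.eventually (by decide),
    h.contDiffAt_b.eventually (by decide), h.contDiffAt_g.eventually (by decide)]
    with s hs ha hb hg
  rw [EventuallyEq.deriv_eq (hs.mono fun _ hr ↦ hr φ)]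
  exact (hasDerivAt_frameVec_polar (ha.differentiableAt two_ne_zero).hasDerivAt
    (hb.differentiableAt two_ne_zero).hasDerivAt
    (hg.differentiableAt two_ne_zero).hasDerivAt φ).deriv

lemma deriv_deriv_velocity_polar (h : MeridianFlow u p a b g t) (φ : ℝ) :
    deriv (deriv fun s ↦ u (radialVec s φ)) t =
      frameVec (deriv (deriv a) t - 2 * deriv b t - a t) (deriv (deriv b) t + 2 * deriv a t - b t)
        (deriv (deriv g) t) t φ := by
  have ha := (h.contDiffAt_a.differentiableAt two_ne_zero).hasDerivAt
  have hb := (h.contDiffAt_b.differentiableAt two_ne_zero).hasDerivAt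
  rw [(h.deriv_velocity_polar φ).deriv_eq, (hasDerivAt_frameVec_polar
    ((hasDerivAt_deriv_of_contDiffAt h.contDiffAt_a).fun_sub hb)
    ((hasDerivAt_deriv_of_contDiffAt h.contDiffAt_b).fun_add ha)
    (hasDerivAt_deriv_of_contDiffAt h.contDiffAt_g) φ).deriv]
  congr 1 <;> ring

lemma deriv_velocity_azim (h : MeridianFlow u p a b g t) :
    deriv (fun ψ ↦ u (radialVec t ψ)) = fun φ ↦
      frameVec (-(g t * sin t)) (-(g t * cos t)) (a t * sin t + b t * cos t) t φ := by
  funext φ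
  simp only [h.velocity_radialVec]
  exact (hasDerivAt_frameVec_azim _ _ _ _ _).deriv

lemma fderiv_velocity_polar (h : MeridianFlow u p a b g t) (φ : ℝ) :
    fderiv ℝ u (radialVec t φ) (polarVec t φ) =
      frameVec (deriv a t - b t) (deriv b t + a t) (deriv g t) t φ := by
  rw [← deriv_comp_radialVec_polar ((h.contDiffAt_velocity φ).differentiableAt two_ne_zero),
    (h.deriv_velocity_polar φ).self_of_nhds]

lemma fderiv_velocity_azim (h : MeridianFlow u p a b g t) (φ : ℝ) :
    fderiv ℝ u (radialVec t φ) (azimVec φ) =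
      frameVec (-g t) (-(cot t * g t)) (a t + cot t * b t) t φ := by
  have hsin := h.sin_pos.ne'
  have hazim := deriv_comp_radialVec_azim
    ((h.contDiffAt_velocity φ).differentiableAt two_ne_zero)
  rw [h.deriv_velocity_azim, ← inv_smul_eq_iff₀ hsin] at hazim
  rw [← hazim, cot_eq_cos_div_sin]
  unfold frameVec
  match_scalars <;> field_simp

lemma convection_eq (h : MeridianFlow u p a b g t) (φ : ℝ) :
    fderiv ℝ u (radialVec t φ) (u (radialVec t φ)) =
      frameVec (-a t ^ 2 + b t * (deriv a t - b t) - g t ^ 2)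
        (-(a t * b t) + b t * (deriv b t + a t) - cot t * g t ^ 2)
        (-(a t * g t) + b t * deriv g t + g t * (a t + cot t * b t)) t φ := by
  rw [h.velocity_radialVec, frameVec, map_add, map_add, map_smul, map_smul, map_smul,
    h.fderiv_velocity_radial, h.fderiv_velocity_polar, h.fderiv_velocity_azim]
  unfold frameVec
  module

lemma laplacian_velocity (h : MeridianFlow u p a b g t) (φ : ℝ) :
    Δ u (radialVec t φ) = frameVec
      (deriv (deriv a) t + cot t * deriv a t - 2 * (a t + deriv b t + cot t * b t))
      (deriv (deriv b) t + cot t * deriv b t - b t / sin t ^ 2 + 2 * deriv a t)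
      (deriv (deriv g) t + cot t * deriv g t - g t / sin t ^ 2) t φ := by
  have hsin := h.sin_pos.ne'
  rw [laplacian_radialVec_of_homogeneous (h.contDiffAt_velocity φ) (h.velocity_smul φ) hsin,
    h.deriv_deriv_velocity_polar, (h.deriv_velocity_polar φ).self_of_nhds, h.deriv_velocity_azim,
    (hasDerivAt_frameVec_azim _ _ _ _ _).deriv, cot_eq_cos_div_sin]
  unfold frameVec
  match_scalars <;> field_simp <;> grind [sin_sq_add_cos_sq t]

lemma divergence_eq_zero (h : MeridianFlow u p a b g t) :
    a t + deriv b t + cot t * b t = 0 := by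
  have hdiv := (h.navierStokes 0).sum_inner_fderiv
    ((h.contDiffAt_velocity 0).differentiableAt two_ne_zero) (sphericalFrame t 0)
  simp only [Fin.sum_univ_three, coe_sphericalFrame, Matrix.cons_val, h.fderiv_velocity_radial,
    h.fderiv_velocity_polar, h.fderiv_velocity_azim, inner_radialVec_frameVec,
    inner_polarVec_frameVec, inner_azimVec_frameVec] at hdiv
  linear_combination hdiv

lemma momentum (h : MeridianFlow u p a b g t) (φ : ℝ) (v : V3) :
    ⟪v, Δ u (radialVec t φ)⟫_ℝ =
      ⟪v, fderiv ℝ u (radialVec t φ) (u (radialVec t φ))⟫_ℝ + fderiv ℝ p (radialVec t φ) v := by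
  simpa only [real_inner_comm] using (h.navierStokes φ).inner_laplacian (h.contDiffAt_velocity φ) v

lemma radial_momentum (h : MeridianFlow u p a b g t) (φ : ℝ) :
    deriv (deriv a) t + cot t * deriv a t - 2 * (a t + deriv b t + cot t * b t) =
      -a t ^ 2 + b t * deriv a t - b t ^ 2 - g t ^ 2 - 2 * p (radialVec t φ) := by
  have hmom := h.momentum φ (radialVec t φ)
  rw [h.laplacian_velocity, h.convection_eq, inner_radialVec_frameVec, inner_radialVec_frameVec,
    fderiv_apply_self_of_homogeneous (h.differentiableAt_pressure φ) (h.pressure_smul φ),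
    smul_eq_mul] at hmom
  push_cast at hmom
  linear_combination hmom

/-- The radial equation expresses the pressure through the profiles, which do not depend on `φ`. -/
lemma pressure_eq (h : MeridianFlow u p a b g t) (φ ψ : ℝ) :
    p (radialVec t φ) = p (radialVec t ψ) := by
  linarith [h.radial_momentum φ, h.radial_momentum ψ]

lemma fderiv_pressure_azim (h : MeridianFlow u p a b g t) (φ : ℝ) :
    fderiv ℝ p (radialVec t φ) (azimVec φ) = 0 := by
  have hazim := deriv_comp_radialVec_azim (h.differentiableAt_pressure φ)
  simp only [fun ψ ↦ h.pressure_eq ψ φ, deriv_const] at hazim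
  exact (smul_eq_zero.1 hazim.symm).resolve_left h.sin_pos.ne'

lemma meridianEq (h : MeridianFlow u p a b g t) :
    MeridianEq a b g (fun s ↦ p (radialVec s 0)) t where
  contDiffAt_a := h.contDiffAt_a
  contDiffAt_b := h.contDiffAt_b
  contDiffAt_g := h.contDiffAt_g
  differentiableAt_P := (h.differentiableAt_pressure 0).comp t
    (hasDerivAt_radialVec_polar t 0).differentiableAt
  div := h.divergence_eq_zero
  radial := h.radial_momentum 0
  polar := by
    have hmom := h.momentum 0 (polarVec t 0)
    rw [h.laplacian_velocity, h.convection_eq, inner_polarVec_frameVec, inner_polarVec_frameVec,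
      ← deriv_comp_radialVec_polar (h.differentiableAt_pressure 0)] at hmom
    linear_combination hmom
  azimuthal := by
    have hmom := h.momentum 0 (azimVec 0)
    rw [h.laplacian_velocity, h.convection_eq, inner_azimVec_frameVec, inner_azimVec_frameVec,
      h.fderiv_pressure_azim] at hmom
    linear_combination hmom

end MeridianFlow

section SphericalComponents

variable {u : V3 → V3} {Ω : Set V3} {t φ : ℝ} {n : WithTop ℕ∞}

lemma norm_radialVec (t φ : ℝ) : ‖radialVec t φ‖ = 1 :=
  (orthonormal_frame t φ).1 0

lemma rho_radialVec (ht : 0 ≤ sin t) (φ : ℝ) : rho (radialVec t φ) = sin t := by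
  rw [rho, ← sqrt_sq ht]
  congr 1
  simp only [radialVec, PiLp.toLp_apply, Matrix.cons_val]
  linear_combination sin t ^ 2 * sin_sq_add_cos_sq φ

lemma eventually_rho_radialVec (φ : ℝ) : ∀ᶠ t in 𝓝[>] (0 : ℝ), rho (radialVec t φ) = sin t :=
  eventually_sin_pos_nhdsGT_zero.mono fun _ ht ↦ rho_radialVec ht.le φ

lemma uRc_radialVec (u : V3 → V3) (t φ : ℝ) :
    uRc u (radialVec t φ) = ⟪radialVec t φ, u (radialVec t φ)⟫_ℝ := by
  rw [uRc, norm_radialVec, inner_vec3]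
  ring

lemma uTc_radialVec (u : V3 → V3) (ht : 0 < sin t) (φ : ℝ) :
    uTc u (radialVec t φ) = -⟪polarVec t φ, u (radialVec t φ)⟫_ℝ := by
  rw [uTc, norm_radialVec, rho_radialVec ht.le, inner_vec3]
  generalize u (radialVec t φ) = w
  simp only [radialVec, polarVec, PiLp.toLp_apply, Matrix.cons_val]
  field

lemma uPc_radialVec (u : V3 → V3) (ht : 0 < sin t) (φ : ℝ) :
    uPc u (radialVec t φ) = ⟪azimVec φ, u (radialVec t φ)⟫_ℝ := by
  rw [uPc, rho_radialVec ht.le, inner_vec3]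
  generalize u (radialVec t φ) = w
  simp only [radialVec, azimVec, PiLp.toLp_apply, Matrix.cons_val]
  field

lemma frameVec_inner (w : V3) (t φ : ℝ) :
    frameVec ⟪radialVec t φ, w⟫_ℝ ⟪polarVec t φ, w⟫_ℝ ⟪azimVec φ, w⟫_ℝ t φ = w := by
  simpa [Fin.sum_univ_three, coe_sphericalFrame, frameVec] using (sphericalFrame t φ).sum_repr' w

lemma AxisymOn.eq_frameVec (h : AxisymOn u Ω) (ht : 0 < sin t) (hΩ : ∀ φ, radialVec t φ ∈ Ω)
    (φ : ℝ) : u (radialVec t φ) = frameVec (uRc u (radialVec t 0)) (-uTc u (radialVec t 0))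
      (uPc u (radialVec t 0)) t φ := by
  obtain ⟨hR, hT, hP⟩ := h _ (hΩ φ) _ (hΩ 0) (by simp only [norm_radialVec]) rfl
  rw [← hR, ← hT, ← hP, uRc_radialVec, uTc_radialVec u ht, uPc_radialVec u ht, neg_neg,
    frameVec_inner]

lemma contDiff_radialVec (φ : ℝ) : ContDiff ℝ n fun t ↦ radialVec t φ :=
  contDiff_euclidean.2 fun
    | 0 => contDiff_sin.mul contDiff_const
    | 1 => contDiff_sin.mul contDiff_const
    | 2 => contDiff_cos.neg

lemma contDiff_polarVec (φ : ℝ) : ContDiff ℝ n fun t ↦ polarVec t φ :=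
  contDiff_euclidean.2 fun
    | 0 => contDiff_cos.mul contDiff_const
    | 1 => contDiff_cos.mul contDiff_const
    | 2 => contDiff_sin

lemma eventually_sin_pos (ht : 0 < sin t) : ∀ᶠ s in 𝓝 t, 0 < sin s :=
  continuous_sin.continuousAt.eventually_const_lt ht

lemma contDiffAt_comp_radialVec (hu : ContDiffAt ℝ n u (radialVec t φ)) :
    ContDiffAt ℝ n (fun s ↦ u (radialVec s φ)) t :=
  hu.comp t (contDiff_radialVec φ).contDiffAt

lemma contDiffAt_uRc_radialVec (hu : ContDiffAt ℝ n u (radialVec t φ)) :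
    ContDiffAt ℝ n (fun s ↦ uRc u (radialVec s φ)) t := by
  simp only [uRc_radialVec]
  exact (contDiff_radialVec φ).contDiffAt.inner ℝ (contDiffAt_comp_radialVec hu)

lemma contDiffAt_uTc_radialVec (hu : ContDiffAt ℝ n u (radialVec t φ)) (ht : 0 < sin t) :
    ContDiffAt ℝ n (fun s ↦ uTc u (radialVec s φ)) t :=
  ((contDiff_polarVec φ).contDiffAt.inner ℝ (contDiffAt_comp_radialVec hu)).neg
    |>.congr_of_eventuallyEq <| (eventually_sin_pos ht).mono fun _ hs ↦ uTc_radialVec u hs φ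

lemma contDiffAt_uPc_radialVec (hu : ContDiffAt ℝ n u (radialVec t φ)) (ht : 0 < sin t) :
    ContDiffAt ℝ n (fun s ↦ uPc u (radialVec s φ)) t :=
  (contDiffAt_const.inner ℝ (contDiffAt_comp_radialVec hu))
    |>.congr_of_eventuallyEq <| (eventually_sin_pos ht).mono fun _ hs ↦ uPc_radialVec u hs φ

end SphericalComponents

section ConeFlow

variable {u : V3 → V3} {p : V3 → ℝ} {Ω : Set V3} {t : ℝ}

/-- A `(-1)`-homogeneous axisymmetric solution of the stationary Navier–Stokes equations on the
cone over `Ω`, of class `C²` with a `C¹` pressure. -/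
structure ConeFlow (u : V3 → V3) (p : V3 → ℝ) (Ω : Set V3) : Prop where
  velocity_smul : ∀ x ∈ cone3 Ω, ∀ r : ℝ, 0 < r → u (r • x) = r⁻¹ • u x
  pressure_smul : ∀ x ∈ cone3 Ω, ∀ r : ℝ, 0 < r → p (r • x) = (r ^ 2)⁻¹ * p x
  contDiffOn_velocity : ContDiffOn ℝ 2 u (cone3 Ω)
  contDiffOn_pressure : ContDiffOn ℝ 1 p (cone3 Ω)
  axisymOn : AxisymOn u (cone3 Ω)
  navierStokes : ∀ x ∈ cone3 Ω, NSEq u p x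

lemma ConeFlow.meridianFlow (h : ConeFlow u p Ω) (hopen : IsOpen (cone3 Ω)) (ht : 0 < sin t)
    (hΩ : ∀ᶠ s in 𝓝 t, ∀ φ, radialVec s φ ∈ cone3 Ω) :
    MeridianFlow u p (fun s ↦ uRc u (radialVec s 0)) (fun s ↦ -uTc u (radialVec s 0))
      (fun s ↦ uPc u (radialVec s 0)) t := by
  have hmem := hΩ.self_of_nhds
  have hu (φ : ℝ) : ContDiffAt ℝ 2 u (radialVec t φ) :=
    h.contDiffOn_velocity.contDiffAt (hopen.mem_nhds (hmem φ))
  have hr : ∀ᶠ r : ℝ in 𝓝 1, 0 < r := eventually_gt_nhds one_pos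
  exact
    { sin_pos := ht
      contDiffAt_velocity := hu
      differentiableAt_pressure := fun φ ↦
        (h.contDiffOn_pressure.contDiffAt (hopen.mem_nhds (hmem φ))).differentiableAt one_ne_zero
      velocity_smul := fun φ ↦ hr.mono fun r hr ↦ by
        rw [h.velocity_smul _ (hmem φ) r hr, zpow_neg_one]
      pressure_smul := fun φ ↦ hr.mono fun r hr ↦ by
        rw [h.pressure_smul _ (hmem φ) r hr, zpow_neg, smul_eq_mul, zpow_ofNat]
      contDiffAt_a := contDiffAt_uRc_radialVec (hu 0)
      contDiffAt_b := (contDiffAt_uTc_radialVec (hu 0) ht).neg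
      contDiffAt_g := contDiffAt_uPc_radialVec (hu 0) ht
      velocity_eq := (hΩ.and (eventually_sin_pos ht)).mono fun s hs ↦
        h.axisymOn.eq_frameVec hs.2 hs.1
      navierStokes := fun φ ↦ h.navierStokes _ (hmem φ) }

end ConeFlow

section SouthPole

variable {x : V3} {δ : ℝ}

lemma mem_cone3_of_norm_eq_one {Ω : Set V3} (hx : x ∈ Ω) (hnorm : ‖x‖ = 1) : x ∈ cone3 Ω :=
  ⟨norm_ne_zero_iff.1 (by simp [hnorm]), by simpa [hnorm] using hx⟩

lemma norm_eq_one_of_mem_NSCap (hx : x ∈ NSCap δ) : ‖x‖ = 1 :=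
  mem_sphere_zero_iff_norm.1 hx.1.1

lemma isOpen_cone3_NSCap (δ : ℝ) : IsOpen (cone3 (NSCap δ)) := by
  have heq : cone3 (NSCap δ) =
      {x : V3 | x ≠ 0} ∩ (fun x : V3 ↦ ‖x‖⁻¹ • x) ⁻¹' (ball S3 δ \ {S3}) := by
    ext x
    refine and_congr_right fun hx ↦ ?_
    simp [NSCap, sphere2, norm_smul, hx]
  rw [heq]
  refine ContinuousOn.isOpen_inter_preimage (fun x hx ↦ ?_) isOpen_ne
    (isOpen_ball.sdiff isClosed_singleton)
  exact ((continuous_norm.continuousAt.inv₀ (norm_ne_zero_iff.2 hx)).smul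
    continuousAt_id).continuousWithinAt

lemma dist_radialVec_S3_sq (t φ : ℝ) : dist (radialVec t φ) S3 ^ 2 = 2 - 2 * cos t := by
  rw [EuclideanSpace.dist_sq_eq, Fin.sum_univ_three]
  simp only [dist_eq, sq_abs, radialVec, S3, PiLp.toLp_apply, Matrix.cons_val, PiLp.single_apply,
    Fin.isValue, Fin.reduceEq, ↓reduceIte, sub_zero, sub_neg_eq_add]
  linear_combination sin t ^ 2 * sin_sq_add_cos_sq φ + sin_sq_add_cos_sq t

lemma eventually_radialVec_mem_NSCap (hδ : 0 < δ) :
    ∀ᶠ t in 𝓝[>] (0 : ℝ), ∀ φ, radialVec t φ ∈ NSCap δ := by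
  have hlt : ∀ᶠ t in 𝓝[>] (0 : ℝ), 2 - 2 * cos t < δ ^ 2 := by
    have hcont : Continuous fun t ↦ 2 - 2 * cos t := by fun_prop
    exact nhdsWithin_le_nhds (hcont.continuousAt.eventually_lt_const (by simpa using pow_pos hδ 2))
  filter_upwards [hlt, eventually_sin_pos_nhdsGT_zero] with t ht hsin φ
  refine ⟨⟨mem_sphere_zero_iff_norm.2 (norm_radialVec t φ), ?_⟩, fun hS ↦ ?_⟩
  · exact lt_of_pow_lt_pow_left₀ 2 hδ.le (by rwa [dist_radialVec_S3_sq])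
  · have hrho := rho_radialVec hsin.le φ
    rw [Set.mem_singleton_iff.1 hS] at hrho
    simp [rho, S3, hsin.ne] at hrho

lemma tendsto_radialVec_nhdsGT_zero :
    Tendsto (fun t ↦ radialVec t 0) (𝓝[>] 0) (𝓝[sphere2 \ {S3}] S3) := by
  refine tendsto_nhdsWithin_iff.2 ⟨?_, ?_⟩
  · have hS : radialVec 0 0 = S3 := by ext i; fin_cases i <;> simp [radialVec, S3]
    exact hS ▸ (contDiff_radialVec (n := 0) 0).continuous.continuousAt.mono_left nhdsWithin_le_nhds
  · filter_upwards [eventually_radialVec_mem_NSCap one_pos] with t ht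
    exact ⟨(ht 0).1.1, (ht 0).2⟩

/-- The angle between `-e₃` and a point of the unit sphere. -/
def southAngle (x : V3) : ℝ := arccos (-x 2)

lemma sq_add_sq_eq_of_mem_sphere2 (hx : x ∈ sphere2) : x 0 ^ 2 + x 1 ^ 2 = 1 - x 2 ^ 2 := by
  have h := EuclideanSpace.norm_sq_eq x
  rw [mem_sphere_zero_iff_norm.1 hx, Fin.sum_univ_three] at h
  simp only [norm_eq_abs, sq_abs] at h
  linarith

lemma cos_southAngle (hx : x ∈ sphere2) : cos (southAngle x) = -x 2 := by
  have h := sq_add_sq_eq_of_mem_sphere2 hx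
  rw [southAngle, cos_arccos] <;> nlinarith [sq_nonneg (x 0), sq_nonneg (x 1)]

lemma sin_southAngle (hx : x ∈ sphere2) : sin (southAngle x) = rho x := by
  rw [southAngle, sin_arccos, rho, sq_add_sq_eq_of_mem_sphere2 hx, neg_sq]

lemma southAngle_pos (hx : x ∈ sphere2 \ {S3}) : 0 < southAngle x := by
  have h := sq_add_sq_eq_of_mem_sphere2 hx.1
  refine arccos_pos.2 (lt_of_not_ge fun hle ↦ hx.2 ?_)
  have h0 : x 0 = 0 := by nlinarith [sq_nonneg (x 0), sq_nonneg (x 1)]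
  have h1 : x 1 = 0 := by nlinarith [sq_nonneg (x 0), sq_nonneg (x 1)]
  have h2 : x 2 = -1 := by rw [h0, h1] at h; nlinarith
  ext i
  fin_cases i <;> simp [S3, h0, h1, h2]

lemma tendsto_southAngle : Tendsto southAngle (𝓝[sphere2 \ {S3}] S3) (𝓝[>] 0) := by
  refine tendsto_nhdsWithin_iff.2 ⟨?_, ?_⟩
  · have hcont : Continuous southAngle := by unfold southAngle; fun_prop
    have h := hcont.tendsto S3
    rw [show southAngle S3 = 0 by simp [southAngle, S3]] at h
    exact h.mono_left nhdsWithin_le_nhds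
  · filter_upwards [self_mem_nhdsWithin] with x hx using southAngle_pos hx

lemma eventually_mem_NSCap (hδ : 0 < δ) : ∀ᶠ x in 𝓝[sphere2 \ {S3}] S3, x ∈ NSCap δ := by
  filter_upwards [self_mem_nhdsWithin, nhdsWithin_le_nhds (ball_mem_nhds S3 hδ)] with x hx hball
  exact ⟨⟨hx.1, hball⟩, hx.2⟩

lemma tendsto_of_eventually_eq_radialVec_southAngle {F : V3 → ℝ} {L : ℝ}
    (hF : ∀ᶠ x in 𝓝[sphere2 \ {S3}] S3, F (radialVec (southAngle x) 0) = F x)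
    (hL : Tendsto (fun t ↦ F (radialVec t 0)) (𝓝[>] 0) (𝓝 L)) :
    Tendsto F (𝓝[sphere2 \ {S3}] S3) (𝓝 L) :=
  (hL.comp tendsto_southAngle).congr' hF

lemma rho_radialVec_southAngle (hx : x ∈ sphere2) : rho (radialVec (southAngle x) 0) = rho x := by
  rw [rho_radialVec (by rw [sin_southAngle hx]; exact sqrt_nonneg _), sin_southAngle hx]

lemma AxisymOn.eventually_eq_radialVec_southAngle {u : V3 → V3}
    (h : AxisymOn u (cone3 (NSCap δ))) (hδ : 0 < δ) :
    ∀ᶠ x in 𝓝[sphere2 \ {S3}] S3, rho (radialVec (southAngle x) 0) = rho x ∧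
      uRc u (radialVec (southAngle x) 0) = uRc u x ∧
      uPc u (radialVec (southAngle x) 0) = uPc u x := by
  filter_upwards [eventually_mem_NSCap hδ,
    tendsto_southAngle.eventually (eventually_radialVec_mem_NSCap hδ)] with x hx hx'
  have hnorm := norm_eq_one_of_mem_NSCap hx
  obtain ⟨hR, -, hP⟩ := h _ (mem_cone3_of_norm_eq_one (hx' 0) (norm_radialVec _ _)) _
    (mem_cone3_of_norm_eq_one hx hnorm) (by rw [hnorm, norm_radialVec])
    (by simp [radialVec, cos_southAngle hx.1.1])
  exact ⟨rho_radialVec_southAngle hx.1.1, hR, hP⟩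

lemma ConeFlow.eventually_meridianFlow {u : V3 → V3} {p : V3 → ℝ} (h : ConeFlow u p (NSCap δ))
    (hδ : 0 < δ) : ∀ᶠ t in 𝓝[>] (0 : ℝ),
      MeridianFlow u p (fun s ↦ uRc u (radialVec s 0)) (fun s ↦ -uTc u (radialVec s 0))
        (fun s ↦ uPc u (radialVec s 0)) t := by
  have hcap := eventually_radialVec_mem_NSCap hδ
  filter_upwards [eventually_eventually_nhdsWithin.2 hcap, eventually_sin_pos_nhdsGT_zero,
    self_mem_nhdsWithin] with t hnear hsin htpos
  rw [isOpen_Ioi.nhdsWithin_eq htpos] at hnear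
  exact h.meridianFlow (isOpen_cone3_NSCap δ) hsin <|
    hnear.mono fun s hs φ ↦ mem_cone3_of_norm_eq_one (hs φ) (norm_radialVec s φ)

end SouthPole

end

/-- expansion when `τ < 2`, `τ ≠ 0`. -/
theorem expansion_tau_lt_two_ne_zero (δ : ℝ) (hδ : 0 < δ) (u : V3 → V3) (p : V3 → ℝ)
    (hu_hom : ∀ x ∈ cone3 (NSCap δ), ∀ lam : ℝ, 0 < lam → u (lam • x) = lam⁻¹ • u x)
    (hp_hom : ∀ x ∈ cone3 (NSCap δ), ∀ lam : ℝ, 0 < lam → p (lam • x) = (lam ^ 2)⁻¹ * p x)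
    (hu_reg : ContDiffOn ℝ 2 u (cone3 (NSCap δ)))
    (hp_reg : ContDiffOn ℝ 1 p (cone3 (NSCap δ)))
    (haxi : AxisymOn u (cone3 (NSCap δ)))
    (hNS : ∀ x ∈ cone3 (NSCap δ), NSEq u p x)
    (τ : ℝ) (hτ : Tendsto (fun x => rho x * uTc u x) (𝓝[sphere2 \ {S3}] S3) (𝓝 τ))
    (hτl : τ < 2) (hτ0 : τ ≠ 0) :
    (∃ L1 : ℝ, Tendsto (fun x => rho x * uPc u x) (𝓝[sphere2 \ {S3}] S3) (𝓝 L1)) ∧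
    (∃ L2 : ℝ, Tendsto (fun x => rho x ^ (max τ 0) * uRc u x)
      (𝓝[sphere2 \ {S3}] S3) (𝓝 L2)) := by
  have hflow : ConeFlow u p (NSCap δ) := ⟨hu_hom, hp_hom, hu_reg, hp_reg, haxi, hNS⟩
  have hsys := eventually_polarSystem <|
    (hflow.eventually_meridianFlow hδ).mono fun _ ht ↦ ht.meridianEq
  have hrho := eventually_rho_radialVec 0
  have hB : Tendsto (fun t ↦ sin t * -uTc u (radialVec t 0)) (𝓝[>] 0) (𝓝 (-τ)) := by
    refine (hτ.comp tendsto_radialVec_nhdsGT_zero).neg.congr' (hrho.mono fun t ht ↦ ?_)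
    simp only [Function.comp_apply, ht, mul_neg]
  have haxis := haxi.eventually_eq_radialVec_southAngle hδ
  obtain ⟨L₁, hL₁⟩ := PolarSystem.exists_tendsto_Φ hsys hB hτl
  obtain ⟨L₂, hL₂⟩ := PolarSystem.exists_tendsto_sin_rpow_mul_a hsys hB hτl hτ0
  refine ⟨⟨L₁, tendsto_of_eventually_eq_radialVec_southAngle ?_ (hL₁.congr' ?_)⟩,
    ⟨L₂, tendsto_of_eventually_eq_radialVec_southAngle ?_ (hL₂.congr' ?_)⟩⟩
  · filter_upwards [haxis] with x hx using by rw [hx.1, hx.2.2]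
  · filter_upwards [hrho] with t ht using by rw [ht]
  · filter_upwards [haxis] with x hx using by rw [hx.1, hx.2.1]
  · filter_upwards [hrho] with t ht using by rw [ht]
end
end

section
/- Let m ≥ 2 be an integer, let P₁, …, P_m be distinct points on the unit sphere S², and let l₁, …, l_m be integers, each different from 0, 1, and −1, satisfying Σ_{j=1}^m l_j = m − 2. Then there exists a (−1)-homogeneous solution u ∈ C^∞(S² \ {P₁, …, P_m}) of the stationary Navier–Stokes equations such that for each 1 ≤ j ≤ m, the quantity u(x) − 2(|l_j| − 1) · (x − P_j − ⟨x, x − P_j⟩ x)/|x − P_j|² stays bounded as x → P_j on S². (Here (x − P_j − ⟨x, x−P_j⟩x)/|x−P_j|² is the tangential gradient ∇_{S²} ln|x − P_j| at x ∈ S².) -/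
noncomputable section

open Real Filter MeasureTheory Metric Topology
open scoped ENNReal InnerProductSpace

/-!
For a unit vector `P` in dimension `n`, the function `d(x) = |x| - ⟨P, x⟩` satisfies
`Δd = (n - 1)/|x|` and `|∇d|² = 2d/|x|`, hence `Δ log d = (n - 3)/(|x| d)`. So in `ℝ³` the potential
`φ = ∑ⱼ bⱼ log (|x| - ⟨Pⱼ, x⟩)` is harmonic off the rays through the `Pⱼ`, and `u = ∇φ` solves the
Navier–Stokes equations there with the Bernoulli pressure `-|u|²/2`. Since `d(x) = |x - P|²/2` on
the unit sphere, `u` is singular at `Pⱼ` like `2bⱼ` times the tangential gradient of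
`log |x - Pⱼ|`, so `bⱼ = |lⱼ| - 1` is the required choice.
-/

section Calculus

open scoped Gradient Laplacian

variable {E : Type*} [NormedAddCommGroup E] [InnerProductSpace ℝ E]

lemma contDiffAt_gradient [CompleteSpace E] {f : E → ℝ} {x : E} {m n : WithTop ℕ∞}
    (hf : ContDiffAt ℝ n f x) (hmn : m + 1 ≤ n) : ContDiffAt ℝ m (∇ f) x :=
  (InnerProductSpace.toDual ℝ E).symm.contDiff.contDiffAt.comp x (hf.fderiv_right hmn)

lemma gradient_real_comp [CompleteSpace E] {g : ℝ → ℝ} {f : E → ℝ} {x : E}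
    (hg : DifferentiableAt ℝ g (f x)) (hf : DifferentiableAt ℝ f x) :
    ∇ (g ∘ f) x = deriv g (f x) • ∇ f x := by
  rw [gradient, (hg.hasDerivAt.comp_hasFDerivAt x hf.hasFDerivAt).fderiv, map_smul, gradient]

lemma fderiv_fderiv_apply {f : E → ℝ} {x : E} (hf : ContDiffAt ℝ 2 f x) (v w : E) :
    fderiv ℝ (fun y => fderiv ℝ f y w) x v = fderiv ℝ (fderiv ℝ f) x v w := by
  have hdf : DifferentiableAt ℝ (fderiv ℝ f) x :=
    (hf.fderiv_right (m := 1) one_add_one_eq_two.le).differentiableAt one_ne_zero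
  rw [fderiv_clm_apply hdf (differentiableAt_const w)]
  simp

lemma inner_fderiv_gradient_left [CompleteSpace E] {f : E → ℝ} {x : E}
    (hf : ContDiffAt ℝ 2 f x) (v w : E) :
    ⟪fderiv ℝ (∇ f) x v, w⟫_ℝ = fderiv ℝ (fderiv ℝ f) x v w := by
  have hgrad : DifferentiableAt ℝ (∇ f) x :=
    (contDiffAt_gradient (m := 1) hf one_add_one_eq_two.le).differentiableAt one_ne_zero
  have hw : (fun y => fderiv ℝ f y w) = fun y => ⟪∇ f y, w⟫_ℝ := by
    simp only [inner_gradient_left]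
  rw [← fderiv_fderiv_apply hf, hw, fderiv_inner_apply ℝ hgrad (differentiableAt_const w)]
  simp

lemma hasGradientAt_norm [CompleteSpace E] {x : E} (hx : x ≠ 0) :
    HasGradientAt (‖·‖) (‖x‖⁻¹ • x) x := by
  have h := (hasStrictFDerivAt_norm_sq x).hasFDerivAt.sqrt (by simpa using hx)
  simp only [Real.sqrt_sq (norm_nonneg _)] at h
  refine h.congr_fderiv (ContinuousLinearMap.ext fun v => ?_)
  simp only [one_div, mul_inv_rev, smul_apply, coe_innerSL_apply, nsmul_eq_mul, Nat.cast_ofNat,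
    smul_eq_mul, map_smul, InnerProductSpace.toDual_apply_apply]
  field_simp

variable [FiniteDimensional ℝ E]

lemma laplacian_eq_trace_fderiv_gradient {f : E → ℝ} {x : E} (hf : ContDiffAt ℝ 2 f x) :
    Δ f x = LinearMap.trace ℝ E (fderiv ℝ (∇ f) x) := by
  rw [InnerProductSpace.laplacian_eq_iteratedFDeriv_stdOrthonormalBasis,
    LinearMap.trace_eq_sum_inner _ (stdOrthonormalBasis ℝ E)]
  refine Finset.sum_congr rfl fun i _ => ?_
  rw [iteratedFDeriv_two_apply, ContinuousLinearMap.coe_coe, real_inner_comm]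
  exact (inner_fderiv_gradient_left hf _ _).symm

lemma laplacian_eq_trace_of_gradient_eventuallyEq {f : E → ℝ} {F : E → E} {F' : E →L[ℝ] E} {x : E}
    (hf : ContDiffAt ℝ 2 f x) (hF : ∇ f =ᶠ[𝓝 x] F) (hF' : HasFDerivAt F F' x) :
    Δ f x = LinearMap.trace ℝ E F' := by
  rw [laplacian_eq_trace_fderiv_gradient hf, hF.fderiv_eq, hF'.fderiv]

lemma laplacian_real_comp {g : ℝ → ℝ} {f : E → ℝ} {x : E}
    (hg : ContDiffAt ℝ 2 g (f x)) (hf : ContDiffAt ℝ 2 f x) :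
    Δ (g ∘ f) x = deriv g (f x) * Δ f x + deriv (deriv g) (f x) * ‖∇ f x‖ ^ 2 := by
  have hgrad : ∇ (g ∘ f) =ᶠ[𝓝 x] fun y => deriv g (f y) • ∇ f y := by
    filter_upwards [hf.continuousAt.eventually (hg.eventually (by simp)),
      hf.eventually (by simp)] with y hgy hfy
    exact gradient_real_comp (hgy.differentiableAt two_ne_zero) (hfy.differentiableAt two_ne_zero)
  have hg' : HasDerivAt (deriv g) (deriv (deriv g) (f x)) (f x) :=
    ((hg.derivWithin (m := 1) one_add_one_eq_two.le).differentiableAt one_ne_zero).hasDerivAt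
  have hf' : HasFDerivAt (∇ f) (fderiv ℝ (∇ f) x) x :=
    ((contDiffAt_gradient (m := 1) hf one_add_one_eq_two.le).differentiableAt
      one_ne_zero).hasFDerivAt
  rw [laplacian_eq_trace_of_gradient_eventuallyEq (hg.comp x hf) hgrad
    ((hg'.comp_hasFDerivAt x (hf.differentiableAt two_ne_zero).hasFDerivAt).smul hf'),
    laplacian_eq_trace_fderiv_gradient hf]
  simp [← inner_gradient_left, LinearMap.trace_smulRight]

lemma laplacian_continuousLinearMap (ℓ : E →L[ℝ] ℝ) (x : E) : Δ (ℓ : E → ℝ) x = 0 := by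
  have hℓ : fderiv ℝ ℓ = fun _ => ℓ := funext fun _ => ℓ.fderiv
  simp [InnerProductSpace.laplacian_eq_iteratedFDeriv_stdOrthonormalBasis,
    iteratedFDeriv_two_apply, hℓ]

lemma laplacian_norm {x : E} (hx : x ≠ 0) :
    Δ (‖·‖ : E → ℝ) x = (Module.finrank ℝ E - 1) / ‖x‖ := by
  have hgrad : ∇ (‖·‖ : E → ℝ) =ᶠ[𝓝 x] fun y => ‖y‖⁻¹ • y := by
    filter_upwards [isOpen_ne.mem_nhds hx] with y hy
    exact (hasGradientAt_norm hy).gradient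
  have hinv := (hasDerivAt_inv (norm_ne_zero_iff.2 hx)).comp_hasFDerivAt x
    (hasGradientAt_norm hx).hasFDerivAt
  rw [laplacian_eq_trace_of_gradient_eventuallyEq (contDiffAt_norm ℝ hx) hgrad
    (hinv.smul (hasFDerivAt_id x))]
  simp only [Function.comp_apply, map_smul, neg_smul, ContinuousLinearMap.toLinearMap_add,
    ContinuousLinearMap.toLinearMap_smul, ContinuousLinearMap.coe_id,
    ContinuousLinearMap.coe_smulRight, ContinuousLinearMap.toLinearMap_neg, map_add,
    LinearMap.trace_id, smul_eq_mul, LinearMap.trace_smulRight, LinearMap.neg_apply,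
    LinearMap.smul_apply, ContinuousLinearMap.coe_coe, InnerProductSpace.toDual_apply_apply,
    real_inner_self_eq_norm_sq]
  field_simp
  ring

end Calculus

section RaySource

open scoped Gradient Laplacian

variable {E : Type*} [NormedAddCommGroup E] [InnerProductSpace ℝ E]

/-- The defect `‖x‖ - ⟪P, x⟫` in the Cauchy–Schwarz inequality, which for a unit vector `P` vanishes
exactly on the closed ray spanned by `P`. -/
def rayDefect (P x : E) : ℝ := ‖x‖ - ⟪P, x⟫_ℝ

lemma rayDefect_eq_zero_iff {P x : E} (hP : ‖P‖ = 1) : rayDefect P x = 0 ↔ x = ‖x‖ • P := by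
  have h := inner_eq_norm_mul_iff_real (x := P) (y := x)
  rw [hP, one_mul, one_smul] at h
  rw [rayDefect, sub_eq_zero, eq_comm, h, eq_comm]

lemma rayDefect_smul (P x : E) {c : ℝ} (hc : 0 ≤ c) : rayDefect P (c • x) = c * rayDefect P x := by
  rw [rayDefect, rayDefect, norm_smul_of_nonneg hc, inner_smul_right, mul_sub]

lemma rayDefect_of_norm_eq_one {P x : E} (hP : ‖P‖ = 1) (hx : ‖x‖ = 1) :
    rayDefect P x = ‖x - P‖ ^ 2 / 2 := by
  rw [norm_sub_sq_real, hP, hx, rayDefect, hx, real_inner_comm]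
  ring

lemma inner_sub_of_norm_eq_one {P x : E} (hP : ‖P‖ = 1) (hx : ‖x‖ = 1) :
    ⟪x, x - P⟫_ℝ = ‖x - P‖ ^ 2 / 2 := by
  rw [← rayDefect_of_norm_eq_one hP hx, rayDefect, inner_sub_right, real_inner_self_eq_norm_sq,
    hx, one_pow, real_inner_comm]

lemma norm_direction_sub_sq {P x : E} (hP : ‖P‖ = 1) (hx : x ≠ 0) :
    ‖‖x‖⁻¹ • x - P‖ ^ 2 = 2 * rayDefect P x / ‖x‖ := by
  have hx' : ‖x‖ ≠ 0 := norm_ne_zero_iff.2 hx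
  have hunit : ‖‖x‖⁻¹ • x‖ = 1 := by
    rw [norm_smul, norm_inv, norm_norm, inv_mul_cancel₀ hx']
  have h := rayDefect_of_norm_eq_one hP hunit
  rw [rayDefect_smul P x (inv_nonneg.2 (norm_nonneg x))] at h
  field_simp at h ⊢
  linarith

@[fun_prop]
lemma continuous_rayDefect (P : E) : Continuous (rayDefect P) := by
  unfold rayDefect
  fun_prop

lemma contDiffAt_rayDefect (P : E) {x : E} (hx : x ≠ 0) {n : WithTop ℕ∞} :
    ContDiffAt ℝ n (rayDefect P) x :=
  (contDiffAt_norm ℝ hx).sub (innerSL ℝ P).contDiff.contDiffAt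

lemma gradient_rayDefect [CompleteSpace E] (P : E) {x : E} (hx : x ≠ 0) :
    ∇ (rayDefect P) x = ‖x‖⁻¹ • x - P := by
  refine HasGradientAt.gradient ?_
  rw [hasGradientAt_iff_hasFDerivAt, map_sub]
  exact (hasGradientAt_norm hx).hasFDerivAt.sub (InnerProductSpace.toDual ℝ E P).hasFDerivAt

lemma laplacian_rayDefect [FiniteDimensional ℝ E] (P : E) {x : E} (hx : x ≠ 0) :
    Δ (rayDefect P) x = (Module.finrank ℝ E - 1) / ‖x‖ := by
  have h := (contDiffAt_norm ℝ hx).laplacian_sub (innerSL ℝ P).contDiff.contDiffAt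
  rwa [laplacian_continuousLinearMap, sub_zero, laplacian_norm hx] at h

lemma contDiffAt_log_rayDefect {P x : E} (hx : x ≠ 0) (hPx : rayDefect P x ≠ 0) {n : WithTop ℕ∞} :
    ContDiffAt ℝ n (Real.log ∘ rayDefect P) x :=
  (contDiffAt_rayDefect P hx).log hPx

lemma gradient_log_rayDefect [CompleteSpace E] {P x : E} (hx : x ≠ 0) (hPx : rayDefect P x ≠ 0) :
    ∇ (Real.log ∘ rayDefect P) x = (rayDefect P x)⁻¹ • (‖x‖⁻¹ • x - P) := by
  rw [gradient_real_comp (Real.differentiableAt_log hPx)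
    ((contDiffAt_rayDefect P hx (n := 1)).differentiableAt one_ne_zero),
    Real.deriv_log, gradient_rayDefect P hx]

lemma laplacian_log_rayDefect [FiniteDimensional ℝ E] {P x : E} (hP : ‖P‖ = 1) (hx : x ≠ 0)
    (hPx : rayDefect P x ≠ 0) :
    Δ (Real.log ∘ rayDefect P) x = (Module.finrank ℝ E - 3) / (‖x‖ * rayDefect P x) := by
  rw [laplacian_real_comp (Real.contDiffAt_log.2 hPx) (contDiffAt_rayDefect P hx),
    laplacian_rayDefect P hx, gradient_rayDefect P hx, norm_direction_sub_sq hP hx,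
    Real.deriv_log', deriv_inv]
  have hx' : ‖x‖ ≠ 0 := norm_ne_zero_iff.2 hx
  field_simp
  ring

lemma harmonicAt_log_rayDefect [FiniteDimensional ℝ E] (hE : Module.finrank ℝ E = 3) {P x : E}
    (hP : ‖P‖ = 1) (hx : x ≠ 0) (hPx : rayDefect P x ≠ 0) :
    InnerProductSpace.HarmonicAt (Real.log ∘ rayDefect P) x := by
  refine ⟨contDiffAt_log_rayDefect hx hPx, ?_⟩
  filter_upwards [isOpen_ne.mem_nhds hx,
    (continuous_rayDefect P).continuousAt.eventually_ne hPx] with y hy hPy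
  rw [laplacian_log_rayDefect hP hy hPy, hE]
  simp

variable {ι : Type*} [Fintype ι]

/-- Velocity potential of line sources placed along the rays through the points `P k`, with
strengths proportional to `b k`. -/
def raySourcePotential (P : ι → E) (b : ι → ℝ) : E → ℝ :=
  ∑ k, b k • (Real.log ∘ rayDefect (P k))

variable {P : ι → E} {x : E} (b : ι → ℝ)

lemma contDiffAt_raySourcePotential (hx : x ≠ 0) (hPx : ∀ k, rayDefect (P k) x ≠ 0)
    {n : WithTop ℕ∞} : ContDiffAt ℝ n (raySourcePotential P b) x :=
  Finset.sum_induction _ (ContDiffAt ℝ n · x) (fun _ _ => .add) contDiffAt_const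
    fun k _ => (contDiffAt_log_rayDefect hx (hPx k)).const_smul (b k)

lemma gradient_raySourcePotential [CompleteSpace E] (hx : x ≠ 0)
    (hPx : ∀ k, rayDefect (P k) x ≠ 0) :
    ∇ (raySourcePotential P b) x =
      ∑ k, (b k * (rayDefect (P k) x)⁻¹) • (‖x‖⁻¹ • x - P k) := by
  have hdiff : ∀ k, DifferentiableAt ℝ (Real.log ∘ rayDefect (P k)) x := fun k =>
    (contDiffAt_log_rayDefect (n := 1) hx (hPx k)).differentiableAt one_ne_zero
  rw [gradient, raySourcePotential, fderiv_sum fun k _ => (hdiff k).const_smul (b k), map_sum]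
  refine Finset.sum_congr rfl fun k _ => ?_
  rw [fderiv_const_smul (hdiff k), map_smul, mul_smul, ← gradient_log_rayDefect hx (hPx k),
    gradient]

lemma gradient_raySourcePotential_smul [CompleteSpace E] (hx : x ≠ 0)
    (hPx : ∀ k, rayDefect (P k) x ≠ 0) {c : ℝ} (hc : 0 < c) :
    ∇ (raySourcePotential P b) (c • x) = c⁻¹ • ∇ (raySourcePotential P b) x := by
  have hPcx : ∀ k, rayDefect (P k) (c • x) ≠ 0 := fun k => by
    rw [rayDefect_smul _ _ hc.le]
    exact mul_ne_zero hc.ne' (hPx k)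
  have hdir : ‖c • x‖⁻¹ • c • x = ‖x‖⁻¹ • x := by
    rw [norm_smul_of_nonneg hc.le, smul_smul, mul_inv, mul_right_comm, inv_mul_cancel₀ hc.ne',
      one_mul]
  rw [gradient_raySourcePotential b (smul_ne_zero hc.ne' hx) hPcx,
    gradient_raySourcePotential b hx hPx, Finset.smul_sum]
  refine Finset.sum_congr rfl fun k _ => ?_
  rw [hdir, rayDefect_smul _ _ hc.le, smul_smul, mul_inv, mul_left_comm]

lemma harmonicAt_raySourcePotential [FiniteDimensional ℝ E] (hE : Module.finrank ℝ E = 3)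
    (hP : ∀ k, ‖P k‖ = 1) (hx : x ≠ 0) (hPx : ∀ k, rayDefect (P k) x ≠ 0) :
    InnerProductSpace.HarmonicAt (raySourcePotential P b) x :=
  Finset.sum_induction _ (InnerProductSpace.HarmonicAt · x) (fun _ _ => .add)
    (InnerProductSpace.harmonicAt_const 0)
    fun k _ => (harmonicAt_log_rayDefect hE (hP k) hx (hPx k)).const_smul

end RaySource

section Sphere

open scoped Gradient

variable {E : Type*} [NormedAddCommGroup E] [InnerProductSpace ℝ E] [CompleteSpace E]
  {ι : Type*} [Fintype ι]

lemma gradient_raySourcePotential_sub_eq [DecidableEq ι] {P : ι → E} (b : ι → ℝ)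
    (hP : ∀ k, ‖P k‖ = 1) {x : E} (hx : ‖x‖ = 1) (hxP : ∀ k, x ≠ P k) (j : ι) :
    ∇ (raySourcePotential P b) x - (2 * b j / ‖x - P j‖ ^ 2) • (x - P j - ⟪x, x - P j⟫_ℝ • x) =
      b j • x + ∑ k ∈ Finset.univ.erase j, (b k * (rayDefect (P k) x)⁻¹) • (x - P k) := by
  have hdist : ∀ k, ‖x - P k‖ ≠ 0 := fun k => norm_ne_zero_iff.2 (sub_ne_zero.2 (hxP k))
  have hPx : ∀ k, rayDefect (P k) x ≠ 0 := fun k => by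
    rw [rayDefect_of_norm_eq_one (hP k) hx]
    exact div_ne_zero (pow_ne_zero 2 (hdist k)) two_ne_zero
  have hcoeff : b j * (‖x - P j‖ ^ 2 / 2)⁻¹ = 2 * b j / ‖x - P j‖ ^ 2 := by
    rw [inv_div]
    ring
  have hradial : 2 * b j / ‖x - P j‖ ^ 2 * (‖x - P j‖ ^ 2 / 2) = b j := by
    field_simp [hdist j]
  rw [gradient_raySourcePotential b (norm_ne_zero_iff.1 (hx ▸ one_ne_zero)) hPx, hx, inv_one,
    one_smul, ← Finset.add_sum_erase _ _ (Finset.mem_univ j), inner_sub_of_norm_eq_one (hP j) hx,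
    rayDefect_of_norm_eq_one (hP j) hx, hcoeff,
    smul_sub (2 * b j / ‖x - P j‖ ^ 2) (x - P j), smul_smul, hradial]
  abel

lemma exists_norm_gradient_raySourcePotential_sub_le {P : ι → E} (hP : ∀ k, ‖P k‖ = 1)
    (hinj : Function.Injective P) (b : ι → ℝ) (j : ι) :
    ∃ C : ℝ, ∀ᶠ x in 𝓝[Metric.sphere 0 1 \ Set.range P] (P j),
      ‖∇ (raySourcePotential P b) x -
        (2 * b j / ‖x - P j‖ ^ 2) • (x - P j - ⟪x, x - P j⟫_ℝ • x)‖ ≤ C := by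
  classical
  have hdefect : ∀ k ∈ Finset.univ.erase j, rayDefect (P k) (P j) ≠ 0 := fun k hk => by
    rw [Ne, rayDefect_eq_zero_iff (hP k), hP j, one_smul]
    exact hinj.ne (Finset.ne_of_mem_erase hk).symm
  have hcont : ContinuousAt (fun x => b j • x +
      ∑ k ∈ Finset.univ.erase j, (b k * (rayDefect (P k) x)⁻¹) • (x - P k)) (P j) := by
    refine (continuousAt_id.const_smul (b j)).add (tendsto_finsetSum _ fun k hk => ?_)
    exact (((continuous_rayDefect (P k)).continuousAt.inv₀ (hdefect k hk)).const_mul (b k)).smul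
      (continuousAt_id.sub continuousAt_const)
  obtain ⟨C, hC⟩ := (hcont.mono_left nhdsWithin_le_nhds).norm.isBoundedUnder_le
  refine ⟨C, ?_⟩
  filter_upwards [Filter.eventually_map.1 hC, self_mem_nhdsWithin] with x hxC ⟨hx, hxP⟩
  rwa [gradient_raySourcePotential_sub_eq b hP (mem_sphere_zero_iff_norm.1 hx)
    (fun k h => hxP ⟨k, h.symm⟩) j]

end Sphere

section PotentialFlow

open scoped Gradient Laplacian

lemma gradient_apply (f : V3 → ℝ) (x : V3) (i : Fin 3) : ∇ f x i = pd i f x := by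
  rw [pd, ← inner_gradient_left, e3, EuclideanSpace.inner_single_right]
  simp

lemma pd_congr {f g : V3 → ℝ} {x : V3} (h : f =ᶠ[𝓝 x] g) (i : Fin 3) : pd i f x = pd i g x := by
  rw [pd, pd, h.fderiv_eq]

lemma contDiffAt_pd {f : V3 → ℝ} {x : V3} {m n : WithTop ℕ∞} (hf : ContDiffAt ℝ n f x)
    (hmn : m + 1 ≤ n) (i : Fin 3) : ContDiffAt ℝ m (pd i f) x :=
  (hf.fderiv_right hmn).clm_apply contDiffAt_const

lemma pd_pd {f : V3 → ℝ} {x : V3} (hf : ContDiffAt ℝ 2 f x) (i j : Fin 3) :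
    pd i (pd j f) x = fderiv ℝ (fderiv ℝ f) x (e3 i) (e3 j) :=
  fderiv_fderiv_apply hf _ _

lemma pd_comm {f : V3 → ℝ} {x : V3} (hf : ContDiffAt ℝ 2 f x) (i j : Fin 3) :
    pd i (pd j f) x = pd j (pd i f) x := by
  rw [pd_pd hf, pd_pd hf]
  exact hf.isSymmSndFDerivAt (by simp) _ _

lemma lap3_eq_laplacian {f : V3 → ℝ} {x : V3} (hf : ContDiffAt ℝ 2 f x) :
    lap3 f x = Δ f x := by
  rw [InnerProductSpace.laplacian_eq_iteratedFDeriv_orthonormalBasis f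
    (EuclideanSpace.basisFun (Fin 3) ℝ)]
  refine Finset.sum_congr rfl fun i _ => (pd_pd hf i i).trans ?_
  rw [iteratedFDeriv_two_apply]
  simp [e3]

lemma lap3_pd {f : V3 → ℝ} {x : V3} (hf : ContDiffAt ℝ 3 f x) (i : Fin 3) :
    lap3 (pd i f) x = pd i (lap3 f) x := by
  have hpd : ∀ j, ContDiffAt ℝ 2 (pd j f) x := contDiffAt_pd hf two_add_one_eq_three.le
  have hpdpd : ∀ j, DifferentiableAt ℝ (pd j (pd j f)) x := fun j =>
    (contDiffAt_pd (m := 1) (hpd j) one_add_one_eq_two.le j).differentiableAt one_ne_zero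
  have hcomm : ∀ j, pd j (pd i f) =ᶠ[𝓝 x] pd i (pd j f) := fun j => by
    filter_upwards [hf.eventually (by simp)] with y hy
    exact pd_comm (hy.of_le (by norm_num)) j i
  calc lap3 (pd i f) x = ∑ j, pd j (pd i (pd j f)) x :=
        Finset.sum_congr rfl fun j _ => pd_congr (hcomm j) j
    _ = ∑ j, pd i (pd j (pd j f)) x := Finset.sum_congr rfl fun j _ => pd_comm (hpd j) j i
    _ = pd i (lap3 f) x := by
        change _ = fderiv ℝ (fun y => ∑ j, pd j (pd j f) y) x (e3 i)
        rw [fderiv_fun_sum fun j _ => hpdpd j, sum_apply]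
        rfl

lemma pd_norm_gradient_sq {f : V3 → ℝ} {x : V3} (hf : ContDiffAt ℝ 2 f x) (i : Fin 3) :
    pd i (fun y => ‖∇ f y‖ ^ 2) x = 2 * ∑ j, pd j f x * pd i (pd j f) x := by
  have hpd : ∀ j, DifferentiableAt ℝ (pd j f) x := fun j =>
    (contDiffAt_pd (m := 1) hf one_add_one_eq_two.le j).differentiableAt one_ne_zero
  simp only [EuclideanSpace.real_norm_sq_eq, gradient_apply]
  rw [pd, fderiv_fun_sum fun j _ => (hpd j).fun_pow 2, sum_apply, Finset.mul_sum]
  refine Finset.sum_congr rfl fun j _ => ?_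
  rw [fderiv_fun_pow 2 (hpd j)]
  simp only [pd, Nat.add_one_sub_one, pow_one, nsmul_eq_mul, Nat.cast_ofNat, smul_apply,
    smul_eq_mul]
  ring

theorem nsEq_gradient {φ : V3 → ℝ} {x : V3} (hφ : ContDiffAt ℝ 3 φ x) (hΔ : Δ φ =ᶠ[𝓝 x] 0) :
    NSEq (∇ φ) (fun y => -(1 / 2) * ‖∇ φ y‖ ^ 2) x := by
  have hlap : lap3 φ =ᶠ[𝓝 x] 0 := by
    filter_upwards [hφ.eventually (by simp), hΔ] with y hy hΔy
    rw [lap3_eq_laplacian (hy.of_le (by norm_num)), hΔy]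
  have hφ₂ : ContDiffAt ℝ 2 φ x := hφ.of_le (by norm_num)
  unfold NSEq
  simp only [gradient_apply]
  refine ⟨fun i => ?_, hlap.self_of_nhds⟩
  have hviscous : lap3 (fun z => pd i φ z) x = 0 := by
    rw [lap3_pd hφ, pd_congr hlap]
    simp [pd]
  have hconvective : ∑ j, pd j φ x * pd j (fun z => pd i φ z) x
      = ∑ j, pd j φ x * pd i (pd j φ) x :=
    Finset.sum_congr rfl fun j _ => by rw [pd_comm hφ₂ j i]
  have hpressure : pd i (fun y => -(1 / 2) * ‖∇ φ y‖ ^ 2) x =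
      -∑ j, pd j φ x * pd i (pd j φ) x := by
    have hsq : DifferentiableAt ℝ (fun y => ‖∇ φ y‖ ^ 2) x :=
      (contDiffAt_gradient (m := 1) hφ₂ one_add_one_eq_two.le).norm_sq ℝ
        |>.differentiableAt one_ne_zero
    have hgrad := pd_norm_gradient_sq hφ₂ i
    rw [pd] at hgrad ⊢
    rw [fderiv_const_mul hsq, smul_apply, hgrad, smul_eq_mul]
    ring
  rw [hviscous, hconvective, hpressure]
  ring

end PotentialFlow

lemma rayDefect_ne_zero_of_mem_cone3 {ι : Type*} {P : ι → V3} (hP : ∀ k, P k ∈ sphere2) {x : V3}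
    (hx : x ∈ cone3 (sphere2 \ Set.range P)) (k : ι) : rayDefect (P k) x ≠ 0 := by
  rw [Ne, rayDefect_eq_zero_iff (mem_sphere_zero_iff_norm.1 (hP k))]
  refine fun h => hx.2.2 ⟨k, ?_⟩
  rw [eq_inv_smul_iff₀ (norm_ne_zero_iff.2 hx.1), ← h]

theorem existence_finitely_many_singularities_general {ι : Type*} [Finite ι]
    (P : ι → V3) (hP : ∀ j, P j ∈ sphere2) (hPinj : Function.Injective P) (b : ι → ℝ) :
    ∃ (u : V3 → V3) (p : V3 → ℝ),
      ContDiffOn ℝ (⊤ : ℕ∞) u (cone3 (sphere2 \ Set.range P)) ∧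
      (∀ x ∈ cone3 (sphere2 \ Set.range P), ∀ lam : ℝ, 0 < lam →
        u (lam • x) = lam⁻¹ • u x) ∧
      (∀ x ∈ cone3 (sphere2 \ Set.range P), ∀ lam : ℝ, 0 < lam →
        p (lam • x) = (lam ^ 2)⁻¹ * p x) ∧
      (∀ x ∈ cone3 (sphere2 \ Set.range P), NSEq u p x) ∧
      (∀ j, ∃ C : ℝ, ∀ᶠ x in 𝓝[sphere2 \ Set.range P] (P j),
        ‖u x - (2 * b j / ‖x - P j‖ ^ 2) • (x - P j - (⟪x, x - P j⟫_ℝ) • x)‖ ≤ C) := by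
  have := Fintype.ofFinite ι
  have hnorm : ∀ k, ‖P k‖ = 1 := fun k => mem_sphere_zero_iff_norm.1 (hP k)
  let φ := raySourcePotential P b
  have hoff : ∀ x ∈ cone3 (sphere2 \ Set.range P), ∀ k, rayDefect (P k) x ≠ 0 :=
    fun _ hx => rayDefect_ne_zero_of_mem_cone3 hP hx
  have hhom : ∀ x ∈ cone3 (sphere2 \ Set.range P), ∀ lam : ℝ, 0 < lam →
      gradient φ (lam • x) = lam⁻¹ • gradient φ x := fun x hx lam hlam =>
    gradient_raySourcePotential_smul b hx.1 (hoff x hx) hlam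
  refine ⟨gradient φ, fun x => -(1 / 2) * ‖gradient φ x‖ ^ 2, fun x hx => ?_, hhom,
    fun x hx lam hlam => ?_, fun x hx => ?_,
    exists_norm_gradient_raySourcePotential_sub_le hnorm hPinj b⟩
  · exact (contDiffAt_gradient (contDiffAt_raySourcePotential b hx.1 (hoff x hx))
      le_rfl).contDiffWithinAt
  · simp only [hhom x hx lam hlam, norm_smul, norm_inv, Real.norm_of_nonneg hlam.le]
    ring
  · exact nsEq_gradient (contDiffAt_raySourcePotential b hx.1 (hoff x hx))
      (harmonicAt_raySourcePotential b (by simp) hnorm hx.1 (hoff x hx)).2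

/-- existence of `(-1)`-homogeneous solutions with any finite number of
prescribed singular points on `S²` (Theorem 3.1). -/
theorem existence_finitely_many_singularities (m : ℕ) (hm : 2 ≤ m)
    (P : Fin m → V3) (hP : ∀ j, P j ∈ sphere2) (hPinj : Function.Injective P)
    (l : Fin m → ℤ) (hl : ∀ j, l j ≠ 0 ∧ l j ≠ 1 ∧ l j ≠ -1)
    (hsum : ∑ j, l j = (m : ℤ) - 2) :
    ∃ (u : V3 → V3) (p : V3 → ℝ),
      ContDiffOn ℝ (⊤:ℕ∞) u (cone3 (sphere2 \ Set.range P)) ∧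
      (∀ x ∈ cone3 (sphere2 \ Set.range P), ∀ lam : ℝ, 0 < lam →
        u (lam • x) = lam⁻¹ • u x) ∧
      (∀ x ∈ cone3 (sphere2 \ Set.range P), ∀ lam : ℝ, 0 < lam →
        p (lam • x) = (lam ^ 2)⁻¹ * p x) ∧
      (∀ x ∈ cone3 (sphere2 \ Set.range P), NSEq u p x) ∧
      (∀ j, ∃ C : ℝ, ∀ᶠ x in 𝓝[sphere2 \ Set.range P] (P j),
        ‖u x - (2 * (|(l j : ℝ)| - 1) / ‖x - P j‖ ^ 2) •
          (x - P j - (⟪x, x - P j⟫_ℝ) • x)‖ ≤ C) :=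
  existence_finitely_many_singularities_general P hP hPinj fun j => |(l j : ℝ)| - 1
end
end
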